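/- Let Σ be a non-singular fan in ℝ^n whose primitive generators n_1,…,n_r span ℤ^n over ℤ (so X_Σ = U(K_Σ)/G_Σ is simply connected). Then π_2(X_Σ) ≅ ℤ^{r−n}; moreover the loop space ΩU(K_Σ) (loops based at (1,…,1)) is path-connected and simply connected, and the map Ωq_Σ : ΩU(K_Σ) → ΩX_Σ is a universal covering projection with fiber ℤ^{r−n} (up to homotopy); in particular (Ωq_Σ)_* : π_k(ΩU(K_Σ)) → π_k(ΩX_Σ) is an isomorphism for every k ≥ 2. -/

import Mathlib

open scoped BigOperators
attribute [local instance] Classical.propDecidable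

noncomputable section

namespace Toric


/-! ### Cones and fans -/

/-- The real vector associated to an integer vector. -/
def zr {n : ℕ} (v : Fin n → ℤ) : Fin n → ℝ := fun i => (v i : ℝ)

/-- A convex rational polyhedral cone in `ℝ^n`. -/
def IsRatCone {n : ℕ} (σ : Set (Fin n → ℝ)) : Prop :=
  ∃ s : Finset (Fin n → ℤ),
    σ = {x | ∃ lam : (Fin n → ℤ) → ℝ, (∀ v, 0 ≤ lam v) ∧ x = ∑ v ∈ s, lam v • zr v}

/-- A cone is strongly convex if `σ ∩ (-σ) = {0}`. -/
def StronglyConvex {n : ℕ} (σ : Set (Fin n → ℝ)) : Prop := σ ∩ (-σ) = {0}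

/-- `τ` is a face of `σ`, cut out by a linear form nonnegative on `σ`. -/
def IsFaceOf {n : ℕ} (τ σ : Set (Fin n → ℝ)) : Prop :=
  ∃ L : (Fin n → ℝ) →ₗ[ℝ] ℝ, (∀ x ∈ σ, 0 ≤ L x) ∧ τ = σ ∩ {x | L x = 0}

/-- A fan in `ℝ^n`: a finite collection of strongly convex rational polyhedral cones,
closed under taking faces, such that the intersection of two cones is a face of each;
we also require that it strictly contains `{0}`. -/
structure Fan (n : ℕ) where
  cones : Set (Set (Fin n → ℝ))
  finite : cones.Finite
  ratCone : ∀ σ ∈ cones, IsRatCone σ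
  stronglyConvex : ∀ σ ∈ cones, StronglyConvex σ
  face_mem : ∀ σ ∈ cones, ∀ τ, IsFaceOf τ σ → τ ∈ cones
  inter_face : ∀ σ ∈ cones, ∀ τ ∈ cones, IsFaceOf (σ ∩ τ) σ
  zero_mem : ({0} : Set (Fin n → ℝ)) ∈ cones
  nontrivial : cones ≠ {({0} : Set (Fin n → ℝ))}

/-- A fan is complete if its cones cover `ℝ^n`. -/
def Fan.Complete {n : ℕ} (F : Fan n) : Prop := ⋃₀ F.cones = Set.univ

/-- A fan is non-singular if each of its cones is spanned by part of a `ℤ`-basis of `ℤ^n`. -/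
def Fan.NonSingular {n : ℕ} (F : Fan n) : Prop :=
  ∀ σ ∈ F.cones, ∃ (b : Module.Basis (Fin n) ℤ (Fin n → ℤ)) (s : Finset (Fin n)),
    σ = {x | ∃ lam : Fin n → ℝ, (∀ i, 0 ≤ lam i) ∧ x = ∑ i ∈ s, lam i • zr (b i)}

/-- The ray (one-dimensional cone) generated by a vector. -/
def ray {n : ℕ} (v : Fin n → ℝ) : Set (Fin n → ℝ) := {x | ∃ t : ℝ, 0 ≤ t ∧ x = t • v}

/-- The cone spanned by the vectors `n_i`, `i ∈ s`. -/
def coneIdx {n r : ℕ} (N : Fin r → Fin n → ℤ) (s : Finset (Fin r)) : Set (Fin n → ℝ) :=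
  {x | ∃ lam : Fin r → ℝ, (∀ i, 0 ≤ lam i) ∧ x = ∑ i ∈ s, lam i • zr (N i)}

/-- A point of `ℝ^n` lying in the lattice `ℤ^n`. -/
def IsLatticePoint {n : ℕ} (x : Fin n → ℝ) : Prop := ∀ i, ∃ m : ℤ, x i = (m : ℝ)

/-- `N 1, …, N r` is the (complete, repetition-free) list of primitive generators of the
one-dimensional cones of the fan `F`. -/
structure IsPrimGens {n r : ℕ} (F : Fan n) (N : Fin r → Fin n → ℤ) : Prop where
  ray_mem : ∀ k, ray (zr (N k)) ∈ F.cones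
  ne_zero : ∀ k, N k ≠ 0
  primitive : ∀ k, ray (zr (N k)) ∩ {x | IsLatticePoint x}
      = {x | ∃ c : ℕ, x = (c : ℝ) • zr (N k)}
  inj : Function.Injective N
  complete : ∀ σ ∈ F.cones, Module.finrank ℝ (Submodule.span ℝ σ) = 1 →
      ∃ k, σ = ray (zr (N k))

/-- Condition (2.9.1): a positive integral relation among the primitive generators. -/
def Cond1 {n r : ℕ} (N : Fin r → Fin n → ℤ) : Prop :=
  ∃ d : Fin r → ℕ, (∀ k, 0 < d k) ∧ ∑ k, (d k : ℤ) • N k = 0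

/-- Condition (2.9.2): the primitive generators span `ℤ^n` over `ℤ`. -/
def Cond2 {n r : ℕ} (N : Fin r → Fin n → ℤ) : Prop :=
  Submodule.span ℤ (Set.range N) = ⊤

/-- The underlying simplicial complex `K_Σ` of a fan. -/
def KC {n r : ℕ} (F : Fan n) (N : Fin r → Fin n → ℤ) : Set (Finset (Fin r)) :=
  {s | coneIdx N s ∈ F.cones}

/-- A primitive set: it spans no cone of the fan, but every proper subset does. -/
def PrimitiveSet {r : ℕ} (K : Set (Finset (Fin r))) (s : Finset (Fin r)) : Prop :=
  s ∉ K ∧ ∀ t ⊂ s, t ∈ K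

/-- `r_min`: the minimal cardinality of a primitive set. -/
def rmin {r : ℕ} (K : Set (Finset (Fin r))) : ℕ :=
  sInf {m | ∃ s : Finset (Fin r), PrimitiveSet K s ∧ s.card = m}

/-- `d_min = min {d_1, …, d_r}`. -/
def dmin {r : ℕ} (D : Fin r → ℕ) : ℕ := sInf (Set.range D)

/-- The stability dimension `d(D,Σ) = 2(r_min − 1) d_min − 2`. -/
def dBound {r : ℕ} (K : Set (Finset (Fin r))) (D : Fin r → ℕ) : ℤ :=
  2 * ((rmin K : ℤ) - 1) * (dmin D : ℤ) - 2

/-- The connectivity bound `C_D(Σ) = 2(r_min − 1) d_min − 1`. -/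
def CBound {r : ℕ} (K : Set (Finset (Fin r))) (D : Fin r → ℕ) : ℤ :=
  2 * ((rmin K : ℤ) - 1) * (dmin D : ℤ) - 1

/-! ### Coordinate subspaces, `U(K)`, `G_Σ` and the toric quotient -/

/-- The coordinate subspace `L_σ ⊆ ℂ^r`. -/
def LSub {r : ℕ} (σ : Finset (Fin r)) : Set (Fin r → ℂ) := {x | ∀ i ∈ σ, x i = 0}

/-- The complement `U(K)` of the coordinate subspace arrangement of type `K`. -/
def UK {r : ℕ} (K : Set (Finset (Fin r))) : Set (Fin r → ℂ) :=
  (⋃ σ ∈ {s : Finset (Fin r) | s ∉ K}, LSub σ)ᶜ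

lemma mem_UK {r : ℕ} {K : Set (Finset (Fin r))} {x : Fin r → ℂ} :
    x ∈ UK K ↔ ∀ σ : Finset (Fin r), σ ∉ K → ∃ i ∈ σ, x i ≠ 0 := by
  constructor
  · intro h σ hσ
    by_contra hc
    push_neg at hc
    exact h (Set.mem_biUnion hσ (fun i hi => hc i hi))
  · intro h hx
    rcases Set.mem_iUnion₂.1 hx with ⟨σ, hσ, hxσ⟩
    rcases h σ hσ with ⟨i, hi, hne⟩
    exact hne (hxσ i hi)

/-- The group `G_Σ` (as a subset of `ℂ^r`). -/
def GSet {n r : ℕ} (N : Fin r → Fin n → ℤ) : Set (Fin r → ℂ) :=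
  {μ | (∀ k, μ k ≠ 0) ∧ ∀ m : Fin n → ℤ, ∏ k, μ k ^ (∑ j, N k j * m j) = 1}

/-- The orbit relation of the `G_Σ`-action on `U(K_Σ)`. -/
def toricRel {n r : ℕ} (N : Fin r → Fin n → ℤ) (K : Set (Finset (Fin r)))
    (x y : ↥(UK K)) : Prop :=
  ∃ μ ∈ GSet N, (fun i => μ i * (x : Fin r → ℂ) i) = (y : Fin r → ℂ)

/-- The toric variety `X_Σ = U(K_Σ)/G_Σ`, as a topological quotient. -/
def XS {n r : ℕ} (N : Fin r → Fin n → ℤ) (K : Set (Finset (Fin r))) : Type :=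
  Quot (toricRel N K)

instance {n r : ℕ} (N : Fin r → Fin n → ℤ) (K : Set (Finset (Fin r))) :
    TopologicalSpace (XS N K) :=
  instTopologicalSpaceQuot

/-- The quotient map `q_Σ : U(K_Σ) → X_Σ`. -/
def qmap {n r : ℕ} (N : Fin r → Fin n → ℤ) (K : Set (Finset (Fin r))) :
    ↥(UK K) → XS N K :=
  Quot.mk (toricRel N K)

/-- `q_Σ` as a continuous map. -/
def qCont {n r : ℕ} (N : Fin r → Fin n → ℤ) (K : Set (Finset (Fin r))) :
    C(↥(UK K), XS N K) :=
  ⟨qmap N K, continuous_quot_mk⟩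

lemma coneIdx_empty {n r : ℕ} (N : Fin r → Fin n → ℤ) :
    coneIdx N (∅ : Finset (Fin r)) = ({0} : Set (Fin n → ℝ)) := by
  ext x
  constructor
  · rintro ⟨lam, -, hx⟩
    simpa using hx
  · intro hx
    exact ⟨0, fun i => le_refl 0, by simpa using hx⟩

lemma empty_mem_KC {n r : ℕ} (F : Fan n) (N : Fin r → Fin n → ℤ) :
    (∅ : Finset (Fin r)) ∈ KC F N := by
  show coneIdx N ∅ ∈ F.cones
  rw [coneIdx_empty]
  exact F.zero_mem

/-- The point `(1,…,1)`. -/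
def onesC {r : ℕ} : Fin r → ℂ := fun _ => 1

lemma ones_mem_UK {r : ℕ} {K : Set (Finset (Fin r))} (h : (∅ : Finset (Fin r)) ∈ K) :
    (onesC : Fin r → ℂ) ∈ UK K := by
  rw [mem_UK]
  intro σ hσ
  rcases Finset.nonempty_iff_ne_empty.2 (fun he : σ = ∅ => hσ (by rw [he]; exact h)) with ⟨i, hi⟩
  exact ⟨i, hi, one_ne_zero⟩

/-- The base point `(1,…,1)` of `U(K_Σ)`. -/
def onesUK {r : ℕ} {K : Set (Finset (Fin r))} (h : (∅ : Finset (Fin r)) ∈ K) : ↥(UK K) :=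
  ⟨onesC, ones_mem_UK h⟩

/-- The base point `[1,…,1]` of `X_Σ`. -/
def baseX {n r : ℕ} (N : Fin r → Fin n → ℤ) (K : Set (Finset (Fin r)))
    (h : (∅ : Finset (Fin r)) ∈ K) : XS N K :=
  qmap N K (onesUK h)



/-! ### Spaces of tuples of monic polynomials -/

/-- The monic polynomial `z^d + a_{d-1} z^{d-1} + ⋯ + a_0` with coefficient data `a`. -/
def toPoly {d : ℕ} (a : Fin d → ℂ) : Polynomial ℂ :=
  Polynomial.X ^ d + ∑ i : Fin d, Polynomial.C (a i) * Polynomial.X ^ (i : ℕ)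

/-- The space `Pol*_D(S¹, X_Σ)` of `r`-tuples of monic polynomials of multidegree `D`
(in coefficient coordinates) such that for every `σ ∉ K` the polynomials `{f_i : i ∈ σ}`
have no common real root. -/
def PolSp {r : ℕ} (K : Set (Finset (Fin r))) (D : Fin r → ℕ) :
    Set (∀ k : Fin r, Fin (D k) → ℂ) :=
  {f | ∀ σ : Finset (Fin r), σ ∉ K → ∀ t : ℝ,
        ∃ k ∈ σ, (toPoly (f k)).eval (t : ℂ) ≠ 0}

lemma polEval_mem_UK {r : ℕ} {K : Set (Finset (Fin r))} {D : Fin r → ℕ}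
    (f : ↥(PolSp K D)) (t : ℝ) :
    (fun k => (toPoly (f.1 k)).eval (t : ℂ)) ∈ UK K :=
  mem_UK.2 fun σ hσ => f.2 σ hσ t

/-! ### Loop spaces and induced maps on homotopy groups -/

/-- The loop space `Ω X = Map*(S¹, X)` with `S¹ = ℝ ∪ {∞}` (the one-point
compactification of `ℝ`), based at `x₀`. -/
def Loop (X : Type*) [TopologicalSpace X] (x₀ : X) : Type _ :=
  {γ : C(OnePoint ℝ, X) // γ OnePoint.infty = x₀}

instance {X : Type*} [TopologicalSpace X] (x₀ : X) : TopologicalSpace (Loop X x₀) :=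
  instTopologicalSpaceSubtype

/-- The constant loop, base point of `Ω X`. -/
def Loop.const {X : Type*} [TopologicalSpace X] (x₀ : X) : Loop X x₀ :=
  ⟨ContinuousMap.const _ x₀, rfl⟩

/-- A based continuous map induces a continuous map of loop spaces. -/
def loopMap {X Y : Type*} [TopologicalSpace X] [TopologicalSpace Y] {x₀ : X} {y₀ : Y}
    (f : C(X, Y)) (hf : f x₀ = y₀) : C(Loop X x₀, Loop Y y₀) where
  toFun γ := ⟨f.comp γ.1, by simp [γ.2, hf]⟩
  continuous_toFun := by
    apply Continuous.subtype_mk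
    exact (ContinuousMap.continuous_postcomp f).comp continuous_subtype_val

/-- The map induced by a continuous map on homotopy groups (`π_q`). -/
def piMap (q : ℕ) {X Y : Type*} [TopologicalSpace X] [TopologicalSpace Y]
    (f : C(X, Y)) (x : X) :
    HomotopyGroup (Fin q) X x → HomotopyGroup (Fin q) Y (f x) :=
  Quotient.map
    (fun p => ⟨f.comp p.1, fun y hy => by
      show f (p.1 y) = f x
      rw [p.2 y hy]⟩)
    (fun p₁ p₂ h => h.elim fun H => ⟨H.compContinuousMap f⟩)

/-- `f` is a homotopy equivalence through dimension `d`: it induces isomorphisms on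
`π_k` for all `k ≤ d` (at every base point). -/
def HomotopyEquivThrough {X Y : Type*} [TopologicalSpace X] [TopologicalSpace Y]
    (f : C(X, Y)) (d : ℤ) : Prop :=
  ∀ (x : X) (k : ℕ), (k : ℤ) ≤ d → Function.Bijective (piMap k f x)

/-- A genuine homotopy equivalence. -/
def IsHtpyEquiv {X Y : Type*} [TopologicalSpace X] [TopologicalSpace Y]
    (f : C(X, Y)) : Prop :=
  ∃ g : C(Y, X), (f.comp g).Homotopic (ContinuousMap.id Y) ∧
    (g.comp f).Homotopic (ContinuousMap.id X)

/-! ### `i_D`, lifts, and stabilization maps -/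

/-- `j : Pol*_D → Ω U(K_Σ)` is a lift of `i_D` through `Ω q_Σ`, i.e. `Ω q_Σ ∘ j = i_D`:
for every tuple `f` and real `t`, the loop `j f` at time `t` lies over the point
`[f_1(t), …, f_r(t)]` of `X_Σ` (and at `∞` over `[1,…,1]`, automatically). -/
def IsLiftOfID {n r : ℕ} (N : Fin r → Fin n → ℤ) (K : Set (Finset (Fin r)))
    (hE : (∅ : Finset (Fin r)) ∈ K) (D : Fin r → ℕ)
    (j : ↥(PolSp K D) → Loop ↥(UK K) (onesUK hE)) : Prop :=
  ∀ (f : ↥(PolSp K D)) (t : ℝ),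
    qmap N K ((j f).1 (t : OnePoint ℝ)) =
      qmap N K ⟨fun k => (toPoly (f.1 k)).eval (t : ℂ), polEval_mem_UK f t⟩

/-- `i : Pol*_D → Ω X_Σ` is the map `i_D` given by evaluation. -/
def IsID {n r : ℕ} (N : Fin r → Fin n → ℤ) (K : Set (Finset (Fin r)))
    (hE : (∅ : Finset (Fin r)) ∈ K) (D : Fin r → ℕ)
    (i : ↥(PolSp K D) → Loop (XS N K) (baseX N K hE)) : Prop :=
  ∀ (f : ↥(PolSp K D)) (t : ℝ),
    (i f).1 (t : OnePoint ℝ) =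
      qmap N K ⟨fun k => (toPoly (f.1 k)).eval (t : ℂ), polEval_mem_UK f t⟩

/-- `φ` is an admissible parameter for the stabilization maps: a homeomorphism of `ℂ`
onto the half plane `{Re < bound}` carrying `ℝ` onto `(-∞, bound)`. -/
def AdmissiblePhi (bound : ℝ) (φ : ℂ → ℂ) : Prop :=
  Continuous φ ∧ Function.Injective φ ∧ IsOpenMap φ ∧
    Set.range φ = {w : ℂ | w.re < bound} ∧
    φ '' {z : ℂ | z.im = 0} = {z : ℂ | z.im = 0 ∧ z.re < bound}

/-- The defining property of the stabilization map
`s_{D,D'}(f)_k = φ(f_k) · (z - x_k)^{d'_k - d_k}`, where `φ(f)` denotes the monic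
polynomial whose roots are the images under `φ` of the roots of `f`. -/
def StabSpec {r : ℕ} (K : Set (Finset (Fin r))) (φ : ℂ → ℂ) (xpt : Fin r → ℂ)
    (D D' : Fin r → ℕ) (s : ↥(PolSp K D) → ↥(PolSp K D')) : Prop :=
  ∀ (f : ↥(PolSp K D)) (k : Fin r),
    toPoly ((s f).1 k) =
      (((toPoly (f.1 k)).roots.map φ).map
        fun α => Polynomial.X - Polynomial.C α).prod
        * (Polynomial.X - Polynomial.C (xpt k)) ^ (D' k - D k)

/-- The general defining property of the map `j_D : Pol*_D → Ω U(K_Σ)`: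
when `∑ d_k n_k = 0` it is a lift of `i_D` through `Ω q_Σ`, and otherwise it is the
composite `j_{D₀} ∘ s_{D,D₀}` for a suitable `D₀ = m₀ D*` as in condition (2.9.1). -/
def IsJD {n r : ℕ} (N : Fin r → Fin n → ℤ) (K : Set (Finset (Fin r)))
    (hE : (∅ : Finset (Fin r)) ∈ K) (D : Fin r → ℕ)
    (j : C(↥(PolSp K D), Loop ↥(UK K) (onesUK hE))) : Prop :=
  ((∑ k, (D k : ℤ) • N k = 0) ∧ IsLiftOfID N K hE D j) ∨
  ((∑ k, (D k : ℤ) • N k ≠ 0) ∧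
    ∃ (dstar : Fin r → ℕ) (m₀ : ℕ),
      (∀ k, 0 < dstar k) ∧ (∑ k, (dstar k : ℤ) • N k = 0) ∧
      (∀ k, D k < m₀ * dstar k) ∧
      ∃ (φ : ℂ → ℂ) (xpt : Fin r → ℂ),
        AdmissiblePhi ((∑ k, D k : ℕ) : ℝ) φ ∧
        (∀ k, ((∑ k, D k : ℕ) : ℝ) < (xpt k).re) ∧ Function.Injective xpt ∧
        ∃ (j₀ : C(↥(PolSp K fun k => m₀ * dstar k), Loop ↥(UK K) (onesUK hE)))
          (s₀ : C(↥(PolSp K D), ↥(PolSp K fun k => m₀ * dstar k))),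
          IsLiftOfID N K hE _ j₀ ∧ StabSpec K φ xpt D _ s₀ ∧ j = j₀.comp s₀)

/-! ### Stabilized (colimit) spaces -/

/-- The multidegree `D + t·e`. -/
def Dt {r : ℕ} (D : Fin r → ℕ) (t : ℕ) : Fin r → ℕ := fun k => D k + t

/-- Carrier of the stabilized space: the disjoint union of the `Pol*_{D+te}`. -/
def ColCar {r : ℕ} (K : Set (Finset (Fin r))) (D : Fin r → ℕ) : Type :=
  Σ t : ℕ, ↥(PolSp K (Dt D t))

instance {r : ℕ} (K : Set (Finset (Fin r))) (D : Fin r → ℕ) :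
    TopologicalSpace (ColCar K D) := by
  unfold ColCar; infer_instance

/-- The identifications generating the colimit along the stabilization maps. -/
def ColRel {r : ℕ} (K : Set (Finset (Fin r))) (D : Fin r → ℕ)
    (s : ∀ t : ℕ, ↥(PolSp K (Dt D t)) → ↥(PolSp K (Dt D (t + 1)))) :
    ColCar K D → ColCar K D → Prop :=
  fun a b => b = ⟨a.1 + 1, s a.1 a.2⟩

/-- The stabilized space `Pol^Σ_{D+∞} = colim_t Pol*_{D+te}(S¹, X_Σ)`. -/
def PolColim {r : ℕ} (K : Set (Finset (Fin r))) (D : Fin r → ℕ)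
    (s : ∀ t : ℕ, ↥(PolSp K (Dt D t)) → ↥(PolSp K (Dt D (t + 1)))) : Type :=
  Quot (ColRel K D s)

instance {r : ℕ} (K : Set (Finset (Fin r))) (D : Fin r → ℕ)
    (s : ∀ t : ℕ, ↥(PolSp K (Dt D t)) → ↥(PolSp K (Dt D (t + 1)))) :
    TopologicalSpace (PolColim K D s) :=
  instTopologicalSpaceQuot

/-- Admissibility of a family of stabilization maps `s_{D+te}`. -/
def AdmissibleStabFamily {r : ℕ} (K : Set (Finset (Fin r))) (D : Fin r → ℕ)
    (s : ∀ t : ℕ, ↥(PolSp K (Dt D t)) → ↥(PolSp K (Dt D (t + 1)))) : Prop :=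
  ∀ t : ℕ, ∃ (φ : ℂ → ℂ) (xpt : Fin r → ℂ),
    AdmissiblePhi ((∑ k, Dt D t k : ℕ) : ℝ) φ ∧
    (∀ k, ((∑ k, Dt D t k : ℕ) : ℝ) < (xpt k).re) ∧ Function.Injective xpt ∧
    StabSpec K φ xpt (Dt D t) (Dt D (t + 1)) (s t)

/-!
`U(K_Σ)` is the complement of coordinate subspaces of complex codimension at least two, so a map
into it from a closed subset of a cube of dimension at most `3` extends to the whole cube: a smooth
approximation of an extension to `ℂ^r` can be moved off these subspaces by a small translation.
Hence `Ω U(K_Σ)` is path connected and simply connected.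

As the fan is non-singular and its generators span `ℤ^n`, `q_Σ` is a principal bundle under the
torus `G_Σ`. A cube in `X_Σ` therefore lifts, and the lift can be chosen to extend a given one on a
closed subset `A` as soon as maps `A → G_Σ` extend to the cube, e.g. if nowhere vanishing functions
on `A` have logarithms. The boundary of a cube of dimension at least `3` has this property, and
adjunction turns the lifting problems for `Ω q_Σ` into those for `q_Σ` one dimension higher; this
makes `Ω q_Σ` bijective on `π_k` for `k ≥ 2`.

The fibre of `Ω q_Σ` consists of the loops in `G_Σ`. These are classified up to homotopy by their
winding numbers, which form the lattice of integral relations between the generators, free of rank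
`r - n`. As in the theory of universal coverings, this lattice is `π_1(Ω X_Σ) = π_2(X_Σ)`.
-/

/-! ### Extending maps into complements of coordinate subspaces -/

section Extension

variable {κ V : Type*}

/-- The vectors with at most one vanishing coordinate, i.e. the complement of the coordinate
subspaces of complex codimension two. -/
def subsingletonZeros (κ : Type*) : Set (κ → ℂ) := {x | {i | x i = 0}.Subsingleton}

lemma isOpen_setOf_forall_add_ne_zero {X W : Type*} [TopologicalSpace X] [TopologicalSpace W]
    [AddCommGroup W] [ContinuousNeg W] [T2Space W] {f : X → W} (hf : Continuous f) {Q : Set X}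
    (hQ : IsCompact Q) : IsOpen {w | ∀ x ∈ Q, f x + w ≠ 0} := by
  have : {w | ∀ x ∈ Q, f x + w ≠ 0} = ((fun x => -f x) '' Q)ᶜ := by
    ext w
    simp [neg_eq_iff_add_eq_zero]
  exact this ▸ (hQ.image hf.neg).isClosed.isOpen_compl

variable [NormedAddCommGroup V] [NormedSpace ℝ V] [FiniteDimensional ℝ V]

lemma dense_setOf_forall_add_ne_zero {W : Type*} [NormedAddCommGroup W] [NormedSpace ℝ W]
    [FiniteDimensional ℝ W] {f : V → W} (hf : ContDiff ℝ 1 f)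
    (h : Module.finrank ℝ V < Module.finrank ℝ W) : Dense {w | ∀ x, f x + w ≠ 0} := by
  have : {w | ∀ x, f x + w ≠ 0} = (Set.range fun x => -f x)ᶜ := by
    ext w
    simp [neg_eq_iff_add_eq_zero]
  exact this ▸ hf.neg.dense_compl_range_of_finrank_lt_finrank h

lemma isOpenMap_pair_apply [Finite κ] {i j : κ} (hij : i ≠ j) :
    IsOpenMap fun v : κ → ℂ => (v i, v j) := by
  cases nonempty_fintype κ
  let p : (κ → ℂ) →L[ℂ] ℂ × ℂ := (ContinuousLinearMap.proj i).prod (ContinuousLinearMap.proj j)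
  refine p.isOpenMap ?_
  rintro ⟨a, b⟩
  exact ⟨Function.update (fun _ => b) i a, by simp [p, hij.symm]⟩

lemma exists_norm_lt_add_mem_subsingletonZeros [Fintype κ] {f : V → κ → ℂ} (hf : ContDiff ℝ 1 f)
    (hV : Module.finrank ℝ V ≤ 3) {Q : Set V} (hQ : IsCompact Q) {ε : ℝ} (hε : 0 < ε) :
    ∃ v : κ → ℂ, ‖v‖ < ε ∧ ∀ x ∈ Q, f x + v ∈ subsingletonZeros κ := by
  let f₂ : κ × κ → V → ℂ × ℂ := fun p x => (f x p.1, f x p.2)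
  have hf₂ (p) : ContDiff ℝ 1 (f₂ p) := (contDiff_pi.1 hf p.1).prodMk (contDiff_pi.1 hf p.2)
  let S : {p : κ × κ // p.1 ≠ p.2} → Set (κ → ℂ) := fun p =>
    (fun v => (v p.1.1, v p.1.2)) ⁻¹' {w | ∀ x ∈ Q, f₂ p x + w ≠ 0}
  have hopen (p) : IsOpen (S p) :=
    (isOpen_setOf_forall_add_ne_zero (hf₂ p).continuous hQ).preimage (by fun_prop)
  have hdense (p) : Dense (S p) := by
    refine Dense.preimage ?_ (isOpenMap_pair_apply p.2)
    refine (dense_setOf_forall_add_ne_zero (hf₂ p) ?_).mono fun w (hw : ∀ x, _) x _ => hw x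
    rw [Module.finrank_prod, Complex.finrank_real_complex]
    omega
  obtain ⟨v, hv, hvS⟩ := (dense_iInter_of_isOpen hopen hdense).inter_open_nonempty
    (Metric.ball 0 ε) Metric.isOpen_ball ⟨0, Metric.mem_ball_self hε⟩
  refine ⟨v, by simpa using hv, fun x hx i hi j hj => ?_⟩
  by_contra hij
  exact Set.mem_iInter.1 hvS ⟨(i, j), hij⟩ x hx (Prod.ext hi hj)

lemma exists_continuous_near_mem_subsingletonZeros [Fintype κ] {f : V → κ → ℂ}
    (hf : Continuous f) (hV : Module.finrank ℝ V ≤ 3) {Q : Set V} (hQ : IsCompact Q) {ε : ℝ}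
    (hε : 0 < ε) :
    ∃ g : V → κ → ℂ, Continuous g ∧ (∀ x, ‖g x - f x‖ < ε) ∧
      ∀ x ∈ Q, g x ∈ subsingletonZeros κ := by
  obtain ⟨f', hf', hff', -⟩ := hf.exists_contDiff_approx (n := 1) (ε := fun _ => ε / 2)
    continuous_const fun _ => half_pos hε
  obtain ⟨v, hv, hvQ⟩ := exists_norm_lt_add_mem_subsingletonZeros hf' hV hQ (half_pos hε)
  refine ⟨fun x => f' x + v, hf'.continuous.add continuous_const, fun x => ?_, hvQ⟩
  calc ‖f' x + v - f x‖ = ‖(f' x - f x) + v‖ := by congr 1; abel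
    _ ≤ ‖f' x - f x‖ + ‖v‖ := norm_add_le _ _
    _ < ε / 2 + ε / 2 := add_lt_add (dist_eq_norm (f' x) (f x) ▸ hff' x) hv
    _ = ε := add_halves ε

lemma exists_continuous_eqOn_mapsTo_of_subsingletonZeros_subset [Finite κ] {U : Set (κ → ℂ)}
    (hU : IsOpen U) (hUκ : subsingletonZeros κ ⊆ U) {f : V → κ → ℂ} (hf : Continuous f)
    (hV : Module.finrank ℝ V ≤ 3) {Q A : Set V} (hQ : IsCompact Q) (hA : IsCompact A)
    (hfA : Set.MapsTo f A U) :
    ∃ g : V → κ → ℂ, Continuous g ∧ Set.EqOn g f A ∧ Set.MapsTo g Q U := by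
  cases nonempty_fintype κ
  obtain ⟨L, hL, hAL, hLU⟩ := exists_compact_between hA (hU.preimage hf) hfA
  obtain ⟨δ, hδ, hδU⟩ := (hL.image hf).exists_thickening_subset_open hU
    (Set.image_subset_iff.2 hLU)
  obtain ⟨f', hf', hff', hf'Q⟩ := exists_continuous_near_mem_subsingletonZeros hf hV hQ hδ
  obtain ⟨χ, hχ0, hχ1, hχI⟩ := exists_continuous_zero_one_of_isClosed hA.isClosed
    (isOpen_interior (s := L)).isClosed_compl
    (Set.disjoint_left.2 fun x hx hx' => hx' (hAL hx))
  refine ⟨fun x => f x + χ x • (f' x - f x), by fun_prop, fun x hx => by simp [hχ0 hx],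
    fun x hx => ?_⟩
  by_cases hxL : x ∈ interior L
  · refine hδU (Metric.mem_thickening_iff.2 ⟨f x, ⟨x, interior_subset hxL, rfl⟩, ?_⟩)
    rw [dist_eq_norm, add_sub_cancel_left, norm_smul, Real.norm_of_nonneg (hχI x).1]
    exact (mul_le_of_le_one_left (norm_nonneg _) (hχI x).2).trans_lt (hff' x)
  · have hχx : χ x = 1 := hχ1 hxL
    simpa [hχx] using hUκ (hf'Q x hx)

end Extension

section CubeExtensor

open scoped unitInterval

universe u v

/-- `Z` is a *cube extensor* in dimension `d` if every continuous map into `Z` from a closed subset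
of a cube of dimension at most `d` extends to the whole cube, a strong form of
`(d - 1)`-connectedness. Maps on the subset are encoded as globally defined maps that are continuous
there. -/
def IsCubeExtensor (d : ℕ) (Z : Type*) [TopologicalSpace Z] : Prop :=
  ∀ ⦃ι : Type⦄ [Fintype ι], Fintype.card ι ≤ d → ∀ ⦃A : Set (ι → I)⦄, IsClosed A →
    ∀ ⦃g : (ι → I) → Z⦄, ContinuousOn g A → ∃ G : C(ι → I, Z), Set.EqOn G g A

lemma exists_continuousMap_eqOn {Y : Type u} {Z : Type v} [TopologicalSpace Y]
    [NormalSpace Y] [TopologicalSpace Z] [TietzeExtension.{u, v} Z] {A : Set Y} (hA : IsClosed A)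
    {g : Y → Z} (hg : ContinuousOn g A) : ∃ G : C(Y, Z), Set.EqOn G g A := by
  obtain ⟨G, hG⟩ := ContinuousMap.exists_restrict_eq hA
    ⟨A.domRestrict g, continuousOn_iff_continuous_domRestrict.1 hg⟩
  exact ⟨G, fun x hx => DFunLike.congr_fun hG ⟨x, hx⟩⟩

theorem isCubeExtensor_three_of_subsingletonZeros_subset {κ : Type*} [Finite κ]
    {U : Set (κ → ℂ)} (hU : IsOpen U) (hUκ : subsingletonZeros κ ⊆ U) : IsCubeExtensor 3 U := by
  intro ι _ hι A hA g hg
  let incl : (ι → I) → ι → ℝ := fun x i => x i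
  let proj : (ι → ℝ) → ι → I := fun x i => Set.projIcc 0 1 zero_le_one (x i)
  have hproj : Continuous proj :=
    continuous_pi fun i => continuous_projIcc.comp (continuous_apply i)
  have hproj_incl (x) : proj (incl x) = x := funext fun i => Set.projIcc_val _ _
  obtain ⟨f, hf⟩ := exists_continuousMap_eqOn hA (continuous_subtype_val.comp_continuousOn hg)
  obtain ⟨G, hG, hGA, hGU⟩ := exists_continuous_eqOn_mapsTo_of_subsingletonZeros_subset hU hUκ
    (f.continuous.comp hproj) (by simpa using hι)
    (isCompact_univ.image (f := incl) (by fun_prop))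
    (hA.isCompact.image (f := incl) (by fun_prop)) (by
      rintro _ ⟨x, hx, rfl⟩
      rw [Function.comp_apply, hproj_incl, hf hx]
      exact (g x).2)
  refine ⟨⟨fun x => ⟨G (incl x), hGU ⟨x, trivial, rfl⟩⟩, by fun_prop⟩, fun x hx => Subtype.ext ?_⟩
  calc G (incl x) = f (proj (incl x)) := hGA ⟨x, hx, rfl⟩
    _ = g x := by rw [hproj_incl, hf hx]; rfl

end CubeExtensor

/-! ### Continuous logarithms on subsets of cubes -/

section Logarithms

open scoped unitInterval

variable {Y : Type*} [TopologicalSpace Y] {A B : Set Y}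

/-- Every nowhere vanishing continuous function on `A` has a continuous logarithm. -/
def HasLogs (A : Set Y) : Prop :=
  ∀ ⦃δ : Y → ℂ⦄, ContinuousOn δ A → (∀ x ∈ A, δ x ≠ 0) →
    ∃ z : Y → ℂ, ContinuousOn z A ∧ ∀ x ∈ A, Complex.exp (z x) = δ x

lemma hasLogs_singleton (y : Y) : HasLogs ({y} : Set Y) := fun δ _ h0 =>
  ⟨fun _ => Complex.log (δ y), continuousOn_const, by
    rintro x rfl
    exact Complex.exp_log (h0 x rfl)⟩

lemma HasLogs.of_deformation (hB : HasLogs B) (hBA : B ⊆ A) {H : I × Y → Y} (hH : Continuous H)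
    (hHA : ∀ s, ∀ x ∈ A, H (s, x) ∈ A) (hH1 : ∀ x ∈ A, H (1, x) = x)
    (hH0 : ∀ x ∈ A, H (0, x) ∈ B) : HasLogs A := by
  intro δ hδ hne
  obtain ⟨w, hw, hwe⟩ := hB (hδ.mono hBA) fun x hx => hne x (hBA hx)
  let δH : C(I × A, {z : ℂ // z ≠ 0}) :=
    ⟨fun p => ⟨δ (H (p.1, p.2)), hne _ (hHA _ _ p.2.2)⟩,
      (hδ.comp_continuous (f := fun p : I × A => H (p.1, p.2)) (by fun_prop)
        fun p => hHA _ _ p.2.2).subtype_mk _⟩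
  let w₀ : C(A, ℂ) := ⟨fun x => w (H (0, x)),
    hw.comp_continuous (f := fun x : A => H (0, x)) (by fun_prop) fun x => hH0 _ x.2⟩
  have hδw (x : A) : δH (0, x) = (fun z : ℂ ↦ (⟨_, z.exp_ne_zero⟩ : {z : ℂ // z ≠ 0})) (w₀ x) :=
    Subtype.ext (hwe _ (hH0 _ x.2)).symm
  let L := Complex.isCoveringMap_exp.liftHomotopy δH w₀ hδw
  have hL (p : I × A) : Complex.exp (L p) = δ (H (p.1, p.2)) :=
    congrArg Subtype.val (congr_fun (Complex.isCoveringMap_exp.liftHomotopy_lifts δH w₀ hδw) p)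
  refine ⟨fun x => if h : x ∈ A then L (1, ⟨x, h⟩) else 0, ?_, fun x hx => ?_⟩
  · rw [continuousOn_iff_continuous_domRestrict]
    have : Continuous fun a : A => L (1, a) := by fun_prop
    exact this.congr fun a => by simp
  · simp only [hx, dite_true]
    rw [hL, hH1 x hx]

lemma HasLogs.of_retraction (hY : HasLogs (Set.univ : Set Y)) {ρ : Y → Y} (hρ : Continuous ρ)
    (hρA : ∀ x, ρ x ∈ A) (hρ1 : ∀ x ∈ A, ρ x = x) : HasLogs A := by
  intro δ hδ hne
  obtain ⟨z, hz, he⟩ := hY (hδ.comp_continuous hρ hρA).continuousOn fun x _ => hne _ (hρA x)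
  exact ⟨z, hz.mono A.subset_univ, fun x hx => by
    rw [he x trivial, Function.comp_apply, hρ1 x hx]⟩

lemma sub_eq_sub_of_exp_eqOn (hA : IsPreconnected A) {z w : Y → ℂ} (hz : ContinuousOn z A)
    (hw : ContinuousOn w A) (h : ∀ x ∈ A, Complex.exp (z x) = Complex.exp (w x)) {x y : Y}
    (hx : x ∈ A) (hy : y ∈ A) : z x - w x = z y - w y := by
  have he : Set.EqOn z (fun y => w y + (z x - w x)) A := by
    refine Complex.isCoveringMap_exp.eqOn_of_comp_eqOn hA hz (by fun_prop) (fun y hy => ?_) hx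
      (by ring)
    refine Subtype.ext ?_
    change Complex.exp (z y) = Complex.exp (w y + (z x - w x))
    rw [Complex.exp_add, Complex.exp_sub, h x hx, div_self (Complex.exp_ne_zero _), mul_one, h y hy]
  rw [he hy, add_sub_cancel_left]

lemma HasLogs.union (hLA : HasLogs A) (hLB : HasLogs B) (hA : IsClosed A) (hB : IsClosed B)
    (hAB : IsPreconnected (A ∩ B)) : HasLogs (A ∪ B) := by
  intro δ hδ hne
  obtain ⟨z, hz, hze⟩ := hLA (hδ.mono Set.subset_union_left) fun x hx => hne x (Or.inl hx)
  obtain ⟨w, hw, hwe⟩ := hLB (hδ.mono Set.subset_union_right) fun x hx => hne x (Or.inr hx)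
  obtain ⟨c, hc, hzw⟩ : ∃ c : ℂ, Complex.exp c = 1 ∧ ∀ x ∈ A ∩ B, z x = w x + c := by
    rcases (A ∩ B).eq_empty_or_nonempty with h | ⟨p, hp⟩
    · exact ⟨0, Complex.exp_zero, by simp [h]⟩
    have hexp : ∀ x ∈ A ∩ B, Complex.exp (z x) = Complex.exp (w x) :=
      fun x hx => (hze x hx.1).trans (hwe x hx.2).symm
    refine ⟨z p - w p, ?_, fun x hx => ?_⟩
    · rw [Complex.exp_sub, hexp p hp, div_self (Complex.exp_ne_zero _)]
    · rw [← sub_eq_sub_of_exp_eqOn hAB (hz.mono Set.inter_subset_left)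
        (hw.mono Set.inter_subset_right) hexp hx hp, add_sub_cancel]
  have hw' : Set.EqOn (fun x => if x ∈ A then z x else w x + c) (fun x => w x + c) B := by
    intro x hx
    by_cases h : x ∈ A
    · simp [h, hzw x ⟨h, hx⟩]
    · simp [h]
  refine ⟨fun x => if x ∈ A then z x else w x + c, ?_, ?_⟩
  · exact ContinuousOn.union_of_isClosed (hz.congr fun x hx => if_pos hx)
      ((hw.add_const c).congr hw') hA hB
  · rintro x (hx | hx)
    · exact (congrArg Complex.exp (if_pos hx)).trans (hze x hx)
    · exact (congrArg Complex.exp (hw' hx)).trans (by rw [Complex.exp_add, hc, mul_one, hwe x hx])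

end Logarithms

section Cubes

open scoped unitInterval

variable {ι : Type*}

lemma hasLogs_cube : HasLogs (Set.univ : Set (ι → I)) :=
  (hasLogs_singleton 0).of_deformation (Set.subset_univ _) (H := fun p i => p.1 * p.2 i)
    (by fun_prop) (fun _ _ _ => trivial) (fun x _ => funext fun i => one_mul _)
    fun x _ => funext fun i => zero_mul _

lemma hasLogs_face (i : ι) (c : I) : HasLogs {x : ι → I | x i = c} :=
  hasLogs_cube.of_retraction (ρ := fun x => Function.update x i c) (by fun_prop) (by simp)
    (by rintro x rfl; simp)

lemma isClosed_face (i : ι) (c : I) : IsClosed {x : ι → I | x i = c} :=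
  isClosed_eq (continuous_apply i) continuous_const

/-- The boundary of the cube with the open top face in direction `j` removed. -/
def openBox (j : ι) : Set (ι → I) := {x | x j = 0 ∨ ∃ i ≠ j, x i = 0 ∨ x i = 1}

lemma isClosed_openBox [Finite ι] (j : ι) : IsClosed (openBox j) := by
  have : openBox j = {x : ι → I | x j = 0} ∪
      ⋃ i ∈ ({j}ᶜ : Set ι), ({x : ι → I | x i = 0} ∪ {x : ι → I | x i = 1}) := by
    ext x; simp [openBox]
  exact this ▸ (isClosed_face j 0).union (Set.toFinite _ |>.isClosed_biUnion fun i _ =>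
    (isClosed_face i 0).union (isClosed_face i 1))

lemma boundary_eq_openBox_union (j : ι) : Cube.boundary ι = openBox j ∪ {x | x j = 1} := by
  ext x
  refine ⟨fun ⟨i, hi⟩ => ?_, ?_⟩
  · by_cases hij : i = j
    · exact hij ▸ hi.imp Or.inl id
    · exact Or.inl (Or.inr ⟨i, hij, hi⟩)
  · rintro ((h | ⟨i, -, hi⟩) | h)
    exacts [⟨j, Or.inl h⟩, ⟨i, hi⟩, ⟨j, Or.inr h⟩]

lemma isClosed_boundary [Finite ι] : IsClosed (Cube.boundary ι) := by
  have : Cube.boundary ι = ⋃ i, ({x : ι → I | x i = 0} ∪ {x | x i = 1}) := by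
    ext x; simp [Cube.boundary]
  exact this ▸ isClosed_iUnion_of_finite fun i => (isClosed_face i 0).union (isClosed_face i 1)

lemma hasLogs_openBox (j : ι) : HasLogs (openBox j) := by
  refine (hasLogs_face j 0).of_deformation (fun x hx => Or.inl hx)
    (H := fun p => Function.update p.2 j (p.1 * p.2 j)) (by fun_prop) ?_ (by simp) (by simp)
  rintro s x (hx | ⟨i, hij, hx⟩)
  · exact Or.inl (by simp [hx])
  · exact Or.inr ⟨i, hij, by simpa [Function.update_of_ne hij] using hx⟩

lemma isPreconnected_setOf_eqOn (c : ι → I) (S : Set ι) :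
    IsPreconnected {x : ι → I | Set.EqOn x c S} := by
  have : {x : ι → I | Set.EqOn x c S} = Set.univ.pi fun i => {t | i ∈ S → t = c i} := by
    ext x; simp [Set.EqOn]
  refine this ▸ isPreconnected_univ_pi fun i => ?_
  by_cases hi : i ∈ S
  · simpa [hi] using isPreconnected_singleton
  · simpa [hi] using isPreconnected_univ

lemma isPreconnected_rim [Fintype ι] (hι : 3 ≤ Fintype.card ι) (j : ι) :
    IsPreconnected (openBox j ∩ {x | x j = 1}) := by
  let e : ι → I := Function.update 0 j 1
  refine isPreconnected_of_forall e ?_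
  rintro y ⟨hy, hyj : y j = 1⟩
  obtain ⟨i, hij, hyi⟩ := hy.resolve_left (by simp [hyj])
  obtain ⟨l, -, hl⟩ := Finset.exists_mem_notMem_of_card_lt_card (s := {i, j})
    (t := Finset.univ) (Finset.card_le_two.trans_lt hι)
  simp only [Finset.mem_insert, Finset.mem_singleton, not_or] at hl
  let p : ι → I := Function.update e i (y i)
  refine ⟨{x | Set.EqOn x y {j, i}} ∪ {x | Set.EqOn x e {j, l}}, ?_, Or.inr fun _ _ => rfl,
    Or.inl fun _ _ => rfl, (isPreconnected_setOf_eqOn _ _).union p ?_ ?_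
      (isPreconnected_setOf_eqOn _ _)⟩
  · rintro x (hx | hx)
    · exact ⟨Or.inr ⟨i, hij, by rwa [hx (by simp)]⟩, (hx (by simp)).trans hyj⟩
    · have hxl : x l = 0 := (hx (by simp)).trans (by simp [e, hl.2])
      exact ⟨Or.inr ⟨l, hl.2, Or.inl hxl⟩, (hx (by simp)).trans (by simp [e])⟩
  · simp [Set.EqOn, p, e, hij.symm, hyj]
  · simp [Set.EqOn, p, e, hij.symm, hl.1]

lemma hasLogs_boundary [Fintype ι] (hι : 3 ≤ Fintype.card ι) : HasLogs (Cube.boundary ι) := by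
  obtain ⟨j⟩ : Nonempty ι := Fintype.card_pos_iff.1 (by omega)
  exact boundary_eq_openBox_union j ▸ (hasLogs_openBox j).union (hasLogs_face j 1)
    (isClosed_openBox j) (isClosed_face j 1) (isPreconnected_rim hι j)

end Cubes

/-! ### Relative lifting of cubes -/

section Cylinders

open scoped unitInterval

lemma exists_glue {Y Z : Type*} [TopologicalSpace Y] [TopologicalSpace Z] {A B : Set Y}
    (hA : IsClosed A) (hB : IsClosed B) {f g : Y → Z} (hf : ContinuousOn f A)
    (hg : ContinuousOn g B) (h : ∀ x ∈ A, x ∈ B → f x = g x) :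
    ∃ φ : Y → Z, ContinuousOn φ (A ∪ B) ∧ Set.EqOn φ f A ∧ Set.EqOn φ g B := by
  have hφf : Set.EqOn (A.piecewise f g) f A := A.piecewise_eqOn f g
  have hφg : Set.EqOn (A.piecewise f g) g B := fun x hx => by
    by_cases hxA : x ∈ A
    · rw [hφf hxA, h x hxA hx]
    · exact A.piecewise_eq_of_notMem f g hxA
  exact ⟨_, (hf.congr hφf).union_of_isClosed (hg.congr hφg) hA hB, hφf, hφg⟩

variable {κ : Type*}

/-- Inserts `t` as the coordinate `none` in front of a point `y` of the cube `κ → I`. -/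
def cubeCons (t : I) (y : κ → I) : Option κ → I := fun o => o.elim t y

/-- Forgets the coordinate `none`. -/
def cubeTail (x : Option κ → I) : κ → I := fun i => x (some i)

@[fun_prop]
lemma continuous_cubeCons {Y : Type*} [TopologicalSpace Y] {f : Y → I} {g : Y → κ → I}
    (hf : Continuous f) (hg : Continuous g) : Continuous fun y => cubeCons (f y) (g y) :=
  continuous_pi fun o => o.casesOn hf fun i => (continuous_apply i).comp hg

@[fun_prop]
lemma continuous_cubeTail : Continuous (cubeTail : (Option κ → I) → κ → I) := by
  unfold cubeTail
  fun_prop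

/-- The bottom, the top and the part of the side over `A` of the cylinder with axis `none` over
the cube `κ → I`. -/
def cylinder (A : Set (κ → I)) : Set (Option κ → I) :=
  ({x | x none = 0} ∪ {x | x none = 1}) ∪ cubeTail ⁻¹' A

lemma isClosed_cylinder {A : Set (κ → I)} (hA : IsClosed A) : IsClosed (cylinder A) :=
  ((isClosed_face none 0).union (isClosed_face none 1)).union (hA.preimage continuous_cubeTail)

lemma boundary_option : Cube.boundary (Option κ) = cylinder (Cube.boundary κ) := by
  ext x
  simp [Cube.boundary, cylinder, cubeTail, Option.exists]

end Cylinders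

section RelativeLifts

open scoped unitInterval

variable {E B : Type*} [TopologicalSpace E] [TopologicalSpace B] {q : C(E, B)}
  {ι κ : Type*} {A : Set (κ → I)}

/-- Every cube `ι → I` in `B` lifts along `q`, extending any given lift on `A`. -/
def LiftsRel (q : C(E, B)) (A : Set (ι → I)) : Prop :=
  ∀ (f : C(ι → I, B)) ⦃g : (ι → I) → E⦄, ContinuousOn g A → (∀ x ∈ A, q (g x) = f x) →
    ∃ F : C(ι → I, E), (∀ x, q (F x) = f x) ∧ Set.EqOn F g A

lemma LiftsRel.exists_homotopyRel (hq : LiftsRel q (cylinder A)) (hA : IsClosed A)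
    {p₀ p₁ : C(κ → I, E)} (hp : Set.EqOn p₀ p₁ A)
    (H : (q.comp p₀).HomotopyRel (q.comp p₁) A) :
    ∃ M : p₀.HomotopyRel p₁ A, ∀ x, q (M x) = H x := by
  obtain ⟨φ, hφ, hφ₀, hφ₁⟩ := exists_glue (f := fun x => p₀ (cubeTail x))
    (g := fun x => p₁ (cubeTail x))
    ((isClosed_face none 0).union (hA.preimage continuous_cubeTail)) (isClosed_face none 1)
    (by fun_prop) (by fun_prop) (by
      rintro x ((h₀ : x none = 0) | hx) (h₁ : x none = 1)
      · exact absurd (h₀.symm.trans h₁) zero_ne_one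
      · exact hp hx)
  have hcyl : {x : Option κ → I | x none = 0} ∪ cubeTail ⁻¹' A ∪ {x | x none = 1} =
      cylinder A := Set.union_right_comm _ _ _
  obtain ⟨F, hqF, hF⟩ := hq ⟨fun x => H (x none, cubeTail x), by fun_prop⟩ (hcyl ▸ hφ) (by
    rintro x (((h₀ : x none = 0) | (h₁ : x none = 1)) | hx)
    · simp [hφ₀ (Or.inl h₀), h₀]
    · simp [hφ₁ h₁, h₁]
    · rw [hφ₀ (Or.inr hx)]
      exact (H.eq_fst _ hx).symm)
  refine ⟨⟨⟨⟨fun x => F (cubeCons x.1 x.2), by fun_prop⟩, fun y => ?_, fun y => ?_⟩,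
    fun t y hy => ?_⟩, fun x => hqF _⟩
  · exact (hF (Or.inl (Or.inl rfl))).trans (hφ₀ (Or.inl rfl))
  · exact (hF (Or.inl (Or.inr rfl))).trans (hφ₁ rfl)
  · have hy' : cubeTail (cubeCons t y) ∈ A := hy
    exact (hF (Or.inr hy')).trans (hφ₀ (Or.inr hy'))

lemma LiftsRel.homotopicRel (hq : LiftsRel q (cylinder A)) (hA : IsClosed A)
    {p₀ p₁ : C(κ → I, E)} (hp : Set.EqOn p₀ p₁ A)
    (h : (q.comp p₀).HomotopicRel (q.comp p₁) A) : p₀.HomotopicRel p₁ A :=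
  let ⟨H⟩ := h
  (hq.exists_homotopyRel hA hp H).elim fun M _ => ⟨M⟩

lemma piMap_injective_of_liftsRel (k : ℕ) (hq : LiftsRel q (Cube.boundary (Option (Fin k))))
    (e : E) : Function.Injective (piMap k q e) := by
  rintro ⟨p₀⟩ ⟨p₁⟩ h
  refine Quotient.sound ((boundary_option ▸ hq).homotopicRel isClosed_boundary ?_
    (Quotient.exact h))
  exact fun y hy => (p₀.2 y hy).trans (p₁.2 y hy).symm

lemma piMap_surjective_of_liftsRel (k : ℕ) (hq : LiftsRel q (Cube.boundary (Fin k))) (e : E) :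
    Function.Surjective (piMap k q e) := by
  rintro ⟨f⟩
  obtain ⟨F, hF, hFe⟩ := hq f.1 (g := fun _ => e) continuousOn_const fun y hy => (f.2 y hy).symm
  exact ⟨⟦⟨F, hFe⟩⟧, congrArg (Quotient.mk _) (Subtype.ext (ContinuousMap.ext hF))⟩

end RelativeLifts

section CubeExtensors

open scoped unitInterval

variable {Z : Type*} [TopologicalSpace Z] {ι : Type} [Fintype ι] {d : ℕ}

lemma IsCubeExtensor.liftsRel (hZ : IsCubeExtensor d Z) (hι : Fintype.card ι ≤ d)
    {A : Set (ι → I)} (hA : IsClosed A) : LiftsRel (ContinuousMap.const Z ()) A := fun _ _ hg _ =>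
  (hZ hι hA hg).imp fun _ hG => ⟨fun _ => rfl, hG⟩

lemma IsCubeExtensor.homotopicRel (hZ : IsCubeExtensor (d + 1) Z) (hι : Fintype.card ι ≤ d)
    {A : Set (ι → I)} (hA : IsClosed A) {p₀ p₁ : C(ι → I, Z)} (hp : Set.EqOn p₀ p₁ A) :
    p₀.HomotopicRel p₁ A :=
  (hZ.liftsRel (by simpa using hι) (isClosed_cylinder hA)).homotopicRel hA hp (.refl _)

lemma IsCubeExtensor.pathConnectedSpace [Nonempty Z] (hZ : IsCubeExtensor 1 Z) :
    PathConnectedSpace Z := by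
  refine ⟨‹_›, fun z₀ z₁ => ?_⟩
  obtain ⟨H⟩ := ContinuousMap.homotopicRel_empty.1 <|
    hZ.homotopicRel (ι := Empty) (by simp) isClosed_empty (p₀ := .const _ z₀)
      (p₁ := .const _ z₁) (Set.eqOn_empty _ _)
  exact ⟨H.evalAt Empty.elim⟩

lemma IsCubeExtensor.simplyConnectedSpace [Nonempty Z] (hZ : IsCubeExtensor 2 Z) :
    SimplyConnectedSpace Z := by
  rw [simply_connected_iff_paths_homotopic']
  refine ⟨IsCubeExtensor.pathConnectedSpace fun _ _ h => hZ (h.trans one_le_two), fun p q => ?_⟩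
  let e : C(Unit → I, I) := ⟨fun x => x (), by fun_prop⟩
  obtain ⟨H⟩ := hZ.homotopicRel (A := e ⁻¹' {0, 1}) (by simp)
    ((Set.toFinite _).isClosed.preimage e.continuous) (p₀ := p.toContinuousMap.comp e)
    (p₁ := q.toContinuousMap.comp e) (by rintro x (h | h) <;> simp_all)
  exact ⟨⟨⟨⟨fun x => H (x.1, fun _ => x.2), by fun_prop⟩, fun t => H.map_zero_left _,
    fun t => H.map_one_left _⟩, fun s t ht => H.eq_fst s (x := fun _ => t) ht⟩⟩

end CubeExtensors

/-! ### Loop spaces -/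

section LoopCircle

open scoped unitInterval

/-- The quotient map `t ↦ (2 t - 1) / (t (1 - t))` of the interval onto the circle `ℝ ∪ {∞}`,
which identifies the two end points. -/
def intervalToCircle (t : I) : OnePoint ℝ :=
  if t = 0 ∨ t = 1 then OnePoint.infty else ((2 * (t : ℝ) - 1) / (t * (1 - t)) : ℝ)

lemma intervalToCircle_of_endpoint {t : I} (h : t = 0 ∨ t = 1) :
    intervalToCircle t = OnePoint.infty := if_pos h

lemma intervalToCircle_of_not_endpoint {t : I} (h : ¬(t = 0 ∨ t = 1)) :
    intervalToCircle t = ((2 * (t : ℝ) - 1) / (t * (1 - t)) : ℝ) := if_neg h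

lemma pos_and_one_sub_pos {t : I} (h : ¬(t = 0 ∨ t = 1)) : 0 < (t : ℝ) ∧ 0 < 1 - (t : ℝ) := by
  rw [not_or] at h
  exact ⟨unitInterval.pos_iff_ne_zero.2 h.1, sub_pos.2 (unitInterval.lt_one_iff_ne_one.2 h.2)⟩

lemma continuousAt_intervalToCircle_of_endpoint {t : I} (ht : t = 0 ∨ t = 1) :
    ContinuousAt intervalToCircle t := by
  rw [ContinuousAt, intervalToCircle_of_endpoint ht,
    OnePoint.hasBasis_nhds_infty.tendsto_right_iff]
  rintro s ⟨-, hs⟩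
  obtain ⟨R, hR⟩ := hs.isBounded.exists_norm_le
  have hlt : ∀ᶠ u : I in nhds t, R * ((u : ℝ) * (1 - u)) < |2 * (u : ℝ) - 1| := by
    refine (isOpen_lt (by fun_prop) (by fun_prop)).mem_nhds ?_
    rcases ht with rfl | rfl <;> norm_num
  filter_upwards [hlt] with u hu
  by_cases hu' : u = 0 ∨ u = 1
  · exact Or.inr (intervalToCircle_of_endpoint hu')
  · refine Or.inl ⟨_, fun hmem => ?_, (intervalToCircle_of_not_endpoint hu').symm⟩
    obtain ⟨h₁, h₂⟩ := pos_and_one_sub_pos hu'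
    have hb := hR _ hmem
    rw [Real.norm_eq_abs, abs_div, abs_of_pos (mul_pos h₁ h₂), div_le_iff₀ (mul_pos h₁ h₂)] at hb
    exact hb.not_gt hu

lemma continuousAt_intervalToCircle_of_not_endpoint {t : I} (ht : ¬(t = 0 ∨ t = 1)) :
    ContinuousAt intervalToCircle t := by
  have hev : ∀ᶠ u : I in nhds t, ¬(u = 0 ∨ u = 1) :=
    (Set.toFinite {0, 1}).isClosed.isOpen_compl.mem_nhds ht
  obtain ⟨h₁, h₂⟩ := pos_and_one_sub_pos ht
  have hc : ContinuousAt (fun u : I => (2 * (u : ℝ) - 1) / (u * (1 - u))) t :=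
    ContinuousAt.div (by fun_prop) (by fun_prop) (mul_pos h₁ h₂).ne'
  refine (OnePoint.continuous_coe.continuousAt.comp hc).congr ?_
  filter_upwards [hev] with u hu
  exact (intervalToCircle_of_not_endpoint hu).symm

@[fun_prop]
lemma continuous_intervalToCircle : Continuous intervalToCircle :=
  continuous_iff_continuousAt.2 fun t => by
    by_cases h : t = 0 ∨ t = 1
    exacts [continuousAt_intervalToCircle_of_endpoint h,
      continuousAt_intervalToCircle_of_not_endpoint h]

lemma intervalToCircle_eq_iff {s t : I} : intervalToCircle s = intervalToCircle t ↔
    s = t ∨ (s = 0 ∨ s = 1) ∧ (t = 0 ∨ t = 1) := by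
  refine ⟨fun h => ?_, ?_⟩
  · by_cases hs : s = 0 ∨ s = 1 <;> by_cases ht : t = 0 ∨ t = 1
    · exact Or.inr ⟨hs, ht⟩
    · rw [intervalToCircle_of_endpoint hs, intervalToCircle_of_not_endpoint ht] at h
      exact absurd h (OnePoint.infty_ne_coe _)
    · rw [intervalToCircle_of_not_endpoint hs, intervalToCircle_of_endpoint ht] at h
      exact absurd h (OnePoint.coe_ne_infty _)
    · obtain ⟨h₁, h₂⟩ := pos_and_one_sub_pos hs
      obtain ⟨h₃, h₄⟩ := pos_and_one_sub_pos ht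
      rw [intervalToCircle_of_not_endpoint hs, intervalToCircle_of_not_endpoint ht,
        OnePoint.coe_eq_coe, div_eq_div_iff (mul_pos h₁ h₂).ne' (mul_pos h₃ h₄).ne'] at h
      have hfac : ((s : ℝ) - t) * ((1 - (s : ℝ)) * (1 - t) + s * t) = 0 := by linarith
      have hne : (1 - (s : ℝ)) * (1 - t) + s * t ≠ 0 :=
        (add_pos (mul_pos h₂ h₄) (mul_pos h₁ h₃)).ne'
      exact Or.inl (Subtype.ext (sub_eq_zero.1 ((mul_eq_zero.1 hfac).resolve_right hne)))
  · rintro (rfl | ⟨hs, ht⟩)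
    · rfl
    · rw [intervalToCircle_of_endpoint hs, intervalToCircle_of_endpoint ht]

lemma surjective_intervalToCircle : Function.Surjective intervalToCircle := by
  intro u
  induction u using OnePoint.rec with
  | infty => exact ⟨0, intervalToCircle_of_endpoint (Or.inl rfl)⟩
  | coe y =>
    obtain ⟨t, ht, hroot⟩ := intermediate_value_Icc (zero_le_one (α := ℝ))
      (f := fun t : ℝ => 2 * t - 1 - y * (t * (1 - t))) (by fun_prop)
      (show (0 : ℝ) ∈ _ by constructor <;> norm_num)
    have hne : ¬((⟨t, ht⟩ : I) = 0 ∨ (⟨t, ht⟩ : I) = 1) := by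
      rintro (h | h) <;> obtain rfl := congrArg Subtype.val h <;> norm_num at hroot
    obtain ⟨h₁, h₂⟩ := pos_and_one_sub_pos hne
    refine ⟨⟨t, ht⟩, ?_⟩
    rw [intervalToCircle_of_not_endpoint hne, OnePoint.coe_eq_coe, div_eq_iff (mul_pos h₁ h₂).ne']
    exact sub_eq_zero.1 hroot

end LoopCircle

section Loops

open scoped unitInterval

variable {Y Z : Type*} [TopologicalSpace Y] [TopologicalSpace Z] {z₀ : Z}

/-- The value of a loop at the time `t` of the unit interval. -/
def Loop.at (γ : Loop Z z₀) (t : I) : Z := γ.1 (intervalToCircle t)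

lemma Loop.at_of_endpoint (γ : Loop Z z₀) {t : I} (h : t = 0 ∨ t = 1) : γ.at t = z₀ := by
  rw [Loop.at, intervalToCircle_of_endpoint h, γ.2]

lemma Loop.ext_at {γ γ' : Loop Z z₀} (h : ∀ t, γ.at t = γ'.at t) : γ = γ' :=
  Subtype.ext <| ContinuousMap.ext <| surjective_intervalToCircle.forall.2 h

lemma continuous_loop_at : Continuous fun p : Loop Z z₀ × I => p.1.at p.2 :=
  (continuous_eval (F := C(OnePoint ℝ, Z))).comp
    ((continuous_subtype_val.comp continuous_fst).prodMk
      (continuous_intervalToCircle.comp continuous_snd))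

lemma exists_loop_curry (h : C(Y × I, Z)) (hb : ∀ y t, t = 0 ∨ t = 1 → h (y, t) = z₀) :
    ∃ p : C(Y, Loop Z z₀), ∀ y t, (p y).at t = h (y, t) := by
  have hquot : Topology.IsQuotientMap (Prod.map (id : Y → Y) intervalToCircle) :=
    (isProperMap_id.prodMap continuous_intervalToCircle.isProperMap).isClosedMap.isQuotientMap
      (by fun_prop) (Function.surjective_id.prodMap surjective_intervalToCircle)
  have hfac : Function.FactorsThrough h (Prod.map (id : Y → Y) intervalToCircle) := by
    rintro ⟨y, s⟩ ⟨y', t⟩ hyt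
    obtain ⟨rfl, hst⟩ := Prod.mk.inj hyt
    rcases intervalToCircle_eq_iff.1 hst with rfl | ⟨hs, ht⟩
    · rfl
    · exact (hb _ _ hs).trans (hb _ _ ht).symm
  let H : C(Y × OnePoint ℝ, Z) :=
    Topology.IsQuotientMap.lift (f := ⟨_, hquot.continuous⟩) hquot h hfac
  have hH (y : Y) (t : I) : H (y, intervalToCircle t) = h (y, t) :=
    congr_fun (congrArg DFunLike.coe
      (Topology.IsQuotientMap.lift_comp (f := ⟨_, hquot.continuous⟩) hquot h hfac)) (y, t)
  have hH₀ (y : Y) : H.curry y OnePoint.infty = z₀ := by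
    rw [← intervalToCircle_of_endpoint (t := 0) (Or.inl rfl)]
    exact (hH y 0).trans (hb y 0 (Or.inl rfl))
  exact ⟨⟨fun y => ⟨H.curry y, hH₀ y⟩, H.curry.continuous.subtype_mk _⟩, hH⟩

end Loops

section LoopLifts

open scoped unitInterval

variable {E B : Type*} [TopologicalSpace E] [TopologicalSpace B] {q : C(E, B)} {e₀ : E} {b₀ : B}
  {κ : Type*} {A : Set (κ → I)}

lemma LiftsRel.loopMap (hq : LiftsRel q (cylinder A)) (hA : IsClosed A) (h₀ : q e₀ = b₀) :
    LiftsRel (loopMap q h₀) A := by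
  intro f g hg hgf
  obtain ⟨φ, hφ, hφ₀, hφA⟩ := exists_glue (f := fun _ => e₀)
    (g := fun x : Option κ → I => (g (cubeTail x)).at (x none))
    ((isClosed_face none 0).union (isClosed_face none 1)) (hA.preimage continuous_cubeTail)
    continuousOn_const (continuous_loop_at.comp_continuousOn
      ((hg.comp continuous_cubeTail.continuousOn fun _ hx => hx).prodMk
        (continuous_apply none).continuousOn))
    fun x hx _ => (Loop.at_of_endpoint _ hx).symm
  obtain ⟨G, hG, hGφ⟩ := hq ⟨fun x => (f (cubeTail x)).at (x none),
      continuous_loop_at.comp ((f.continuous.comp continuous_cubeTail).prodMk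
        (continuous_apply none))⟩ hφ (by
    rintro x (hx | hx)
    · rw [hφ₀ hx, h₀]
      exact (Loop.at_of_endpoint _ hx).symm
    · rw [hφA hx]
      exact congrArg (Loop.at · (x none)) (hgf _ hx))
  obtain ⟨p, hp⟩ := exists_loop_curry (z₀ := e₀) ⟨fun x => G (cubeCons x.2 x.1), by fun_prop⟩
    fun y t ht => (hGφ (Or.inl ht)).trans (hφ₀ ht)
  refine ⟨p, fun y => Loop.ext_at fun t => ?_, fun y hy => Loop.ext_at fun t => ?_⟩
  · exact (congrArg q (hp y t)).trans (hG _)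
  · have hy' : cubeTail (cubeCons t y) ∈ A := hy
    exact (hp y t).trans ((hGφ (Or.inr hy')).trans (hφA hy'))

lemma IsCubeExtensor.loop {d : ℕ} (hE : IsCubeExtensor (d + 1) E) :
    IsCubeExtensor d (Loop E e₀) := fun _ _ hι _ hA _ hg => by
  obtain ⟨G, -, hG⟩ := (hE.liftsRel (by simpa using hι) (isClosed_cylinder hA)).loopMap hA
    (e₀ := e₀) rfl (.const _ (Loop.const ())) hg fun _ _ => rfl
  exact ⟨G, hG⟩

end LoopLifts

/-! ### Lifting cubes along principal bundles -/

section PrincipalBundles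

open scoped unitInterval

variable {G E B Y : Type*} [Group G] [TopologicalSpace G] [MulAction G E]
  [TopologicalSpace E] [TopologicalSpace B] [TopologicalSpace Y] {q : E → B}

/-- `q` is a principal `G`-bundle. Local triviality is encoded by equivariant maps `c` to `G` on
invariant open sets, the trivialisation being `y ↦ (q y, c y)`. -/
structure IsPrincipalBundle (G : Type*) {E B : Type*} [Group G] [TopologicalSpace G]
    [MulAction G E] [TopologicalSpace E] [TopologicalSpace B] (q : E → B) : Prop where
  isQuotientMap : Topology.IsQuotientMap q
  apply_eq_apply_iff : ∀ {x y : E}, q x = q y ↔ ∃ g : G, g • x = y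
  exists_equivariant : ∀ x : E, ∃ (W : Set E) (c : E → G), IsOpen W ∧ x ∈ W ∧ ContinuousOn c W ∧
    ∀ (g : G), ∀ y ∈ W, g • y ∈ W ∧ c (g • y) = g * c y

/-- The map `f` into the base lifts over the set `S`. -/
def LiftsOn (q : E → B) (f : Y → B) (S : Set Y) : Prop :=
  ∃ F : Y → E, ContinuousOn F S ∧ ∀ x ∈ S, q (F x) = f x

namespace IsPrincipalBundle

lemma apply_smul (hq : IsPrincipalBundle G q) (g : G) (x : E) : q (g • x) = q x :=
  (hq.apply_eq_apply_iff.2 ⟨g, rfl⟩).symm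

lemma isOpenMap [ContinuousConstSMul G E] (hq : IsPrincipalBundle G q) : IsOpenMap q := by
  intro U hU
  have hsat : q ⁻¹' (q '' U) = ⋃ g : G, (g • ·) ⁻¹' U := by
    ext x
    simp only [Set.mem_preimage, Set.mem_image, Set.mem_iUnion]
    constructor
    · rintro ⟨y, hy, hyx⟩
      obtain ⟨g, rfl⟩ := hq.apply_eq_apply_iff.1 hyx.symm
      exact ⟨g, hy⟩
    · rintro ⟨g, hg⟩
      exact ⟨_, hg, hq.apply_smul g x⟩
  rw [← hq.isQuotientMap.isOpen_preimage, hsat]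
  exact isOpen_iUnion fun g => hU.preimage (continuous_const_smul g)

lemma exists_local_section [ContinuousInv G] [ContinuousSMul G E] (hq : IsPrincipalBundle G q)
    (b : B) : ∃ (V : Set B) (s : B → E), IsOpen V ∧ b ∈ V ∧ ContinuousOn s V ∧
      ∀ v ∈ V, q (s v) = v := by
  obtain ⟨x, rfl⟩ := hq.isQuotientMap.surjective b
  obtain ⟨W, c, hW, hx, hc, hcW⟩ := hq.exists_equivariant x
  -- `(c y)⁻¹ • y` only depends on the orbit of `y`
  have hconst : ∀ y ∈ W, ∀ z ∈ W, q y = q z → (c y)⁻¹ • y = (c z)⁻¹ • z := by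
    intro y hy z _ hyz
    obtain ⟨g, rfl⟩ := hq.apply_eq_apply_iff.1 hyz
    rw [(hcW g y hy).2, mul_inv_rev, mul_smul, inv_smul_smul]
  have : Nonempty E := ⟨x⟩
  choose! p hpW hp using fun (v : B) (hv : v ∈ q '' W) => hv
  refine ⟨q '' W, fun v => (c (p v))⁻¹ • p v, hq.isOpenMap W hW, ⟨x, hx, rfl⟩, ?_,
    fun v hv => by rw [hq.apply_smul, hp v hv]⟩
  rintro _ ⟨y, hy, rfl⟩
  refine ContinuousAt.continuousWithinAt ?_
  have hσ : ContinuousAt (fun z => (c z)⁻¹ • z) y :=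
    (hc.continuousAt (hW.mem_nhds hy)).inv.smul continuousAt_id
  rw [ContinuousAt, ← hq.isOpenMap.map_nhds_eq hq.isQuotientMap.continuous.continuousAt,
    Filter.tendsto_map'_iff,
    hconst _ (hpW _ ⟨y, hy, rfl⟩) y hy (hp _ ⟨y, hy, rfl⟩)]
  refine hσ.congr' ?_
  filter_upwards [hW.mem_nhds hy] with z hz
  exact (hconst _ (hpW _ ⟨z, hz, rfl⟩) z hz (hp _ ⟨z, hz, rfl⟩)).symm

lemma exists_translation [IsTopologicalGroup G] (hq : IsPrincipalBundle G q) {S : Set Y}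
    {f g : Y → E} (hf : ContinuousOn f S) (hg : ContinuousOn g S)
    (hfg : ∀ y ∈ S, q (f y) = q (g y)) :
    ∃ δ : Y → G, ContinuousOn δ S ∧ ∀ y ∈ S, δ y • f y = g y := by
  choose! δ hδ using fun y hy => hq.apply_eq_apply_iff.1 (hfg y hy)
  refine ⟨δ, fun y hy => ?_, hδ⟩
  obtain ⟨W, c, hW, hfy, hc, hcW⟩ := hq.exists_equivariant (f y)
  have hδc : ∀ z ∈ S, f z ∈ W → g z ∈ W ∧ δ z = c (g z) * (c (f z))⁻¹ := fun z hz hzW => by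
    rw [← hδ z hz, (hcW _ _ hzW).2, mul_inv_cancel_right]
    exact ⟨(hcW _ _ hzW).1, rfl⟩
  have hcf : ContinuousWithinAt (fun z => c (f z)) S y :=
    (hc.continuousAt (hW.mem_nhds hfy)).comp_continuousWithinAt (hf y hy)
  have hcg : ContinuousWithinAt (fun z => c (g z)) S y :=
    (hc.continuousAt (hW.mem_nhds (hδc y hy hfy).1)).comp_continuousWithinAt (hg y hy)
  refine (hcg.mul hcf.inv).congr_of_eventuallyEq ?_ (hδc y hy hfy).2
  filter_upwards [hf y hy (hW.mem_nhds hfy), self_mem_nhdsWithin] with z hzW hz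
  exact (hδc z hz hzW).2

lemma liftsOn_union [IsTopologicalGroup G] [ContinuousSMul G E] (hq : IsPrincipalBundle G q)
    {f : Y → B} {S T : Set Y} (hS : IsClosed S) (hT : IsClosed T) {ρ : Y → Y}
    (hρ : ContinuousOn ρ T) (hρT : ∀ x ∈ T, ρ x ∈ S ∩ T) (hρST : ∀ x ∈ S ∩ T, ρ x = x)
    (hfS : LiftsOn q f S) (hfT : LiftsOn q f T) : LiftsOn q f (S ∪ T) := by
  obtain ⟨F, hF, hqF⟩ := hfS
  obtain ⟨F', hF', hqF'⟩ := hfT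
  obtain ⟨δ, hδ, hδF⟩ := hq.exists_translation (hF'.mono (Set.inter_subset_right (s := S)))
    (hF.mono (Set.inter_subset_left (t := T))) fun x hx => by rw [hqF x hx.1, hqF' x hx.2]
  obtain ⟨φ, hφ, hφS, hφT⟩ := exists_glue hS hT hF
    (g := fun x => δ (ρ x) • F' x) ((hδ.comp hρ hρT).smul hF') fun x hxS hxT => by
      rw [hρST x ⟨hxS, hxT⟩, hδF x ⟨hxS, hxT⟩]
  refine ⟨φ, hφ, ?_⟩
  rintro x (hx | hx)
  · rw [hφS hx, hqF x hx]
  · rw [hφT hx, hq.apply_smul, hqF' x hx]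

end IsPrincipalBundle

end PrincipalBundles

section CubeSubdivision

open scoped unitInterval

variable {ι : Type*}

lemma mem_Icc_update_right_iff {a b x : ι → I} {i : ι} {m : I} (hm : m ≤ b i) :
    x ∈ Set.Icc a (Function.update b i m) ↔ x ∈ Set.Icc a b ∧ x i ≤ m := by
  simp only [Set.mem_Icc, le_update_iff]
  refine ⟨fun ⟨ha, hi, hb⟩ => ⟨⟨ha, fun j => ?_⟩, hi⟩,
    fun ⟨⟨ha, hb⟩, hi⟩ => ⟨ha, hi, fun j _ => hb j⟩⟩
  by_cases hj : j = i
  exacts [hj ▸ hi.trans hm, hb j hj]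

lemma mem_Icc_update_left_iff {a b x : ι → I} {i : ι} {m : I} (hm : a i ≤ m) :
    x ∈ Set.Icc (Function.update a i m) b ↔ x ∈ Set.Icc a b ∧ m ≤ x i := by
  simp only [Set.mem_Icc, update_le_iff]
  refine ⟨fun ⟨⟨hi, ha⟩, hb⟩ => ⟨⟨fun j => ?_, hb⟩, hi⟩,
    fun ⟨⟨ha, hb⟩, hi⟩ => ⟨⟨hi, fun j _ => ha j⟩, hb⟩⟩
  by_cases hj : j = i
  exacts [hj ▸ hm.trans hi, ha j hj]

lemma ceil_div_lt_ceil_div {ε w w' : ℝ} (hε : 0 < ε) (hw : ε < w)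
    (hw' : w' ≤ ε ∨ w' ≤ w - ε) : ⌈w' / ε⌉₊ < ⌈w / ε⌉₊ := by
  by_cases h : w' ≤ ε
  · calc ⌈w' / ε⌉₊ ≤ 1 := Nat.ceil_le.2 (by simpa using div_le_one_of_le₀ h hε.le)
      _ < ⌈w / ε⌉₊ := Nat.lt_ceil.2 (by simpa using (one_lt_div hε).2 hw)
  · have hpos : 0 ≤ w' / ε := div_nonneg (hε.le.trans (not_le.1 h).le) hε.le
    rw [← Nat.succ_le_iff, Nat.succ_eq_add_one, ← Nat.ceil_add_one hpos]
    refine Nat.ceil_mono ?_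
    rw [div_add_one hε.ne']
    gcongr
    linarith [hw'.resolve_left h]

lemma cube_induction_of_split [Finite ι] {P : (ι → I) → (ι → I) → Prop}
    (hsplit : ∀ a b, a ≤ b → ∀ i, ∀ m ∈ Set.Icc (a i) (b i),
      P a (Function.update b i m) → P (Function.update a i m) b → P a b)
    {ε : ℝ} (hε : 0 < ε) (hsmall : ∀ a b, a ≤ b → (∀ i, (b i - a i : ℝ) ≤ ε) → P a b) :
    P 0 1 := by
  cases nonempty_fintype ι
  let size (a b : ι → I) : ℕ := ∑ i, ⌈(b i - a i : ℝ) / ε⌉₊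
  have size_lt {a b a' b' : ι → I} {i : ι} (h : ∀ k ≠ i, a' k = a k ∧ b' k = b k)
      (hi : (b' i - a' i : ℝ) ≤ ε ∨ (b' i - a' i : ℝ) ≤ b i - a i - ε)
      (hab : ε < (b i - a i : ℝ)) : size a' b' < size a b := by
    refine Finset.sum_lt_sum (fun k _ => ?_) ⟨i, Finset.mem_univ i, ?_⟩
    · rcases eq_or_ne k i with rfl | hk
      · exact (ceil_div_lt_ceil_div hε hab hi).le
      · rw [(h k hk).1, (h k hk).2]
    · exact ceil_div_lt_ceil_div hε hab hi
  suffices h : ∀ (s : ℕ) (a b : ι → I), size a b = s → a ≤ b → P a b from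
    h _ 0 1 rfl zero_le_one
  intro s
  induction s using Nat.strong_induction_on with
  | h s ih =>
    rintro a b rfl hab
    by_cases hε' : ∀ i, (b i - a i : ℝ) ≤ ε
    · exact hsmall a b hab hε'
    obtain ⟨i, hi⟩ := not_forall.1 hε'
    rw [not_le] at hi
    let m : I := ⟨a i + ε, by linarith [(a i).2.1], by linarith [(b i).2.2]⟩
    have ham : a i ≤ m := Subtype.coe_le_coe.1 (le_add_of_nonneg_right hε.le)
    have hmb : m ≤ b i := Subtype.coe_le_coe.1 (lt_sub_iff_add_lt'.1 hi).le
    refine hsplit a b hab i m ⟨ham, hmb⟩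
      (ih _ (size_lt (i := i) (fun k hk => by simp [hk]) (Or.inl (by simp [m])) hi) _ _ rfl
        (le_update_iff.2 ⟨ham, fun k _ => hab k⟩))
      (ih _ (size_lt (i := i) (fun k hk => by simp [hk]) (Or.inr (by simp [m])) hi) _ _
        rfl (update_le_iff.2 ⟨hmb, fun k _ => hab k⟩))

end CubeSubdivision

section CubeLifting

open scoped unitInterval

variable {G E B : Type*} [Group G] [TopologicalSpace G] [IsTopologicalGroup G] [MulAction G E]
  [TopologicalSpace E] [ContinuousSMul G E] [TopologicalSpace B] {ι : Type*}

namespace IsPrincipalBundle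

lemma liftsOn_Icc_of_split {q : E → B} (hq : IsPrincipalBundle G q) {f : (ι → I) → B}
    {a b : ι → I} {i : ι} {m : I} (hm : m ∈ Set.Icc (a i) (b i))
    (hl : LiftsOn q f (Set.Icc a (Function.update b i m)))
    (hr : LiftsOn q f (Set.Icc (Function.update a i m) b)) : LiftsOn q f (Set.Icc a b) := by
  have hunion : Set.Icc a (Function.update b i m) ∪ Set.Icc (Function.update a i m) b =
      Set.Icc a b := by
    ext x
    rw [Set.mem_union, mem_Icc_update_right_iff hm.2, mem_Icc_update_left_iff hm.1]
    have := le_total (x i) m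
    tauto
  refine hunion ▸ hq.liftsOn_union isClosed_Icc isClosed_Icc
    (ρ := fun x => Function.update x i m) (by fun_prop) (fun x hx => ?_) (fun x hx => ?_) hl hr
  · have hx' := ((mem_Icc_update_left_iff hm.1).1 hx).1
    rw [Set.mem_inter_iff, mem_Icc_update_right_iff hm.2, mem_Icc_update_left_iff hm.1,
      Function.update_self]
    have hmem : Function.update x i m ∈ Set.Icc a b :=
      ⟨le_update_iff.2 ⟨hm.1, fun j _ => hx'.1 j⟩, update_le_iff.2 ⟨hm.2, fun j _ => hx'.2 j⟩⟩
    exact ⟨⟨hmem, le_rfl⟩, hmem, le_rfl⟩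
  · rw [← le_antisymm ((mem_Icc_update_right_iff hm.2).1 hx.1).2
      ((mem_Icc_update_left_iff hm.1).1 hx.2).2, Function.update_eq_self]

variable [Finite ι]

lemma exists_cube_lift {q : C(E, B)} (hq : IsPrincipalBundle G q) (f : C(ι → I, B)) :
    ∃ F : C(ι → I, E), ∀ x, q (F x) = f x := by
  cases nonempty_fintype ι
  choose V s hVo hV hs hqs using hq.exists_local_section
  obtain ⟨ε, hε, hball⟩ := lebesgue_number_lemma_of_metric (isCompact_univ (X := ι → I))
    (c := fun b => f ⁻¹' V b) (fun b => (hVo b).preimage f.continuous)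
    fun x _ => Set.mem_iUnion.2 ⟨f x, hV _⟩
  obtain ⟨F, hF, hqF⟩ : LiftsOn q f (Set.Icc 0 1) := by
    refine cube_induction_of_split (P := fun a b => LiftsOn q f (Set.Icc a b))
      (fun a b _ i m hm => hq.liftsOn_Icc_of_split hm) (half_pos hε) fun a b _ hab => ?_
    obtain ⟨v, hv⟩ := hball a trivial
    have hsub : Set.Icc a b ⊆ f ⁻¹' V v := by
      refine Set.Subset.trans (fun x hx => ?_) hv
      refine ((dist_pi_le_iff (half_pos hε).le).2 fun i => ?_).trans_lt (half_lt_self hε)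
      rw [Subtype.dist_eq, Real.dist_eq,
        abs_of_nonneg (sub_nonneg.2 (Subtype.coe_le_coe.2 (hx.1 i)))]
      exact (sub_le_sub_right (Subtype.coe_le_coe.2 (hx.2 i)) _).trans (hab i)
    exact ⟨s v ∘ f, (hs v).comp f.continuous.continuousOn hsub, fun x hx => hqs v _ (hsub hx)⟩
  have huniv : Set.Icc (0 : ι → I) 1 = Set.univ :=
    Set.eq_univ_of_forall fun x => ⟨fun i => (x i).2.1, fun i => (x i).2.2⟩
  rw [huniv] at hF hqF
  exact ⟨⟨F, continuousOn_univ.1 hF⟩, fun x => hqF x trivial⟩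

lemma liftsRel {q : C(E, B)} (hq : IsPrincipalBundle G q) {A : Set (ι → I)}
    (hA : ∀ δ : (ι → I) → G, ContinuousOn δ A → ∃ Δ : C(ι → I, G), Set.EqOn Δ δ A) :
    LiftsRel q A := by
  intro f g hg hgf
  obtain ⟨F, hF⟩ := hq.exists_cube_lift f
  obtain ⟨δ, hδ, hδF⟩ := hq.exists_translation F.continuous.continuousOn hg fun x hx => by
    rw [hF, hgf x hx]
  obtain ⟨Δ, hΔ⟩ := hA δ hδ
  refine ⟨⟨fun x => Δ x • F x, by fun_prop⟩, fun x => ?_, fun x hx => ?_⟩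
  · exact (hq.apply_smul _ _).trans (hF x)
  · exact (congrArg (· • F x) (hΔ hx)).trans (hδF x hx)

end IsPrincipalBundle

end CubeLifting

/-! ### The lattice of a non-singular fan -/

section FanCombinatorics

variable {n r : ℕ} {F : Fan n} {N : Fin r → Fin n → ℤ} {K : Set (Finset (Fin r))}
  {σ : Finset (Fin r)}

lemma zr_injective : Function.Injective (zr : (Fin n → ℤ) → Fin n → ℝ) := fun _ _ h =>
  funext fun i => Int.cast_injective (congr_fun h i)

lemma coneIdx_singleton (N : Fin r → Fin n → ℤ) (k : Fin r) :
    coneIdx N {k} = ray (zr (N k)) := by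
  ext x
  constructor
  · rintro ⟨lam, h0, hx⟩
    exact ⟨lam k, h0 k, by simpa using hx⟩
  · rintro ⟨t, ht, hx⟩
    exact ⟨fun _ => t, fun _ => ht, by simpa using hx⟩

lemma singleton_mem_KC (hPG : IsPrimGens F N) (k : Fin r) : {k} ∈ KC F N := by
  rw [KC, Set.mem_ofPred_eq, coneIdx_singleton]
  exact hPG.ray_mem k

lemma isOpen_UK (K : Set (Finset (Fin r))) : IsOpen (UK K) := by
  refine isOpen_compl_iff.2 (Set.Finite.isClosed_biUnion (Set.toFinite _) fun σ _ => ?_)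
  simp only [LSub, Set.ofPred_forall]
  exact isClosed_biInter fun i _ => isClosed_eq (continuous_apply i) continuous_const

lemma subsingletonZeros_subset_UK (hPG : IsPrimGens F N) :
    subsingletonZeros (Fin r) ⊆ UK (KC F N) := by
  refine fun x hx => mem_UK.2 fun σ hσ => ?_
  by_contra! h0
  refine hσ ?_
  rcases σ.eq_empty_or_nonempty with rfl | ⟨i, hi⟩
  · exact empty_mem_KC F N
  · rw [Finset.eq_singleton_iff_unique_mem.2 ⟨hi, fun j hj => hx (h0 j hj) (h0 i hi)⟩]
    exact singleton_mem_KC hPG i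

lemma filter_eq_zero_mem_of_mem_UK {x : Fin r → ℂ} (hx : x ∈ UK K) :
    (Finset.univ.filter fun i => x i = 0) ∈ K := by
  by_contra h
  obtain ⟨i, hi, hne⟩ := mem_UK.1 hx _ h
  exact hne (Finset.mem_filter.1 hi).2

lemma ray_subset_coneIdx {i : Fin r} (hi : i ∈ σ) : ray (zr (N i)) ⊆ coneIdx N σ := by
  rintro x ⟨t, ht, rfl⟩
  have ht' : (0 : Fin r → ℝ) ≤ Pi.single i t := Pi.single_nonneg.2 ht
  exact ⟨Pi.single i t, ht', by simp [Pi.single_apply, ite_smul, hi]⟩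

lemma exists_generator_mem_of_isFaceOf {ι : Type*} {s : Finset ι} {u : ι → Fin n → ℝ}
    {τ : Set (Fin n → ℝ)}
    (hτ : IsFaceOf τ {x | ∃ lam : ι → ℝ, (∀ i, 0 ≤ lam i) ∧ x = ∑ i ∈ s, lam i • u i})
    {v : Fin n → ℝ} (hv : v ∈ τ) (hv0 : v ≠ 0) : ∃ l ∈ s, u l ∈ τ := by
  obtain ⟨L, hL, rfl⟩ := hτ
  obtain ⟨⟨lam, hlam, hvlam⟩, hLv⟩ := hv
  have hu : ∀ l ∈ s, u l ∈ {x | ∃ lam : ι → ℝ, (∀ i, 0 ≤ lam i) ∧ x = ∑ i ∈ s, lam i • u i} :=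
    fun l hl => ⟨Pi.single l 1, (Pi.single_nonneg.2 zero_le_one : (0 : ι → ℝ) ≤ Pi.single l 1), by
      simp [Pi.single_apply, ite_smul, hl]⟩
  have hsum : ∑ l ∈ s, lam l * L (u l) = 0 := by
    rw [← Set.mem_ofPred.1 hLv, hvlam, map_sum]
    simp
  have hterm := (Finset.sum_eq_zero_iff_of_nonneg
    fun l hl => mul_nonneg (hlam l) (hL _ (hu l hl))).1 hsum
  obtain ⟨l, hl, hl0⟩ : ∃ l ∈ s, lam l ≠ 0 := by
    by_contra! h
    exact hv0 (hvlam.trans (Finset.sum_eq_zero fun l hl => by rw [h l hl, zero_smul]))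
  exact ⟨l, hl, hu l hl, (mul_eq_zero.1 (hterm l hl)).resolve_left hl0⟩

lemma IsPrimGens.eq_basis_of_mem_ray (hPG : IsPrimGens F N)
    (b : Module.Basis (Fin n) ℤ (Fin n → ℤ)) {i : Fin r} {l : Fin n}
    (h : zr (b l) ∈ ray (zr (N i))) : N i = b l := by
  obtain ⟨c, hc⟩ : zr (b l) ∈ {x | ∃ c : ℕ, x = (c : ℝ) • zr (N i)} :=
    hPG.primitive i ▸ ⟨h, fun j => ⟨b l j, rfl⟩⟩
  have hbc : b l = (c : ℤ) • N i := zr_injective (by rw [hc]; funext j; simp [zr])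
  have hdvd : (c : ℤ) ∣ 1 := ⟨b.repr (N i) l, by
    simpa only [map_smul, Finsupp.smul_apply, Module.Basis.repr_self, Finsupp.single_eq_same,
      smul_eq_mul] using congrArg (fun v => b.repr v l) hbc⟩
  rw [hbc, Int.eq_one_of_dvd_one c.cast_nonneg hdvd, one_smul]

lemma exists_basis_of_mem_KC (hPG : IsPrimGens F N) (hNS : F.NonSingular) (hσ : σ ∈ KC F N) :
    ∃ b : Module.Basis (Fin n) ℤ (Fin n → ℤ), ∀ i ∈ σ, ∃ l, N i = b l := by
  obtain ⟨b, s, hb⟩ := hNS _ hσ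
  refine ⟨b, fun i hi => ?_⟩
  have hface : IsFaceOf (ray (zr (N i))) (coneIdx N σ) := by
    simpa only [Set.inter_eq_right.2 (ray_subset_coneIdx hi)] using
      F.inter_face _ hσ _ (hPG.ray_mem i)
  have hNi : zr (N i) ≠ 0 := fun h =>
    hPG.ne_zero i (zr_injective (h.trans (by funext j; simp [zr])))
  obtain ⟨l, -, hl⟩ := exists_generator_mem_of_isFaceOf (hb ▸ hface)
    (⟨1, zero_le_one, (one_smul _ _).symm⟩ : zr (N i) ∈ ray (zr (N i))) hNi
  exact ⟨l, hPG.eq_basis_of_mem_ray b hl⟩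

/-- The lattice map `ℤ^r → ℤ^n`, `e_k ↦ N k`, has over each `σ ∈ K` a section with `N k ↦ e_k` for
`k ∈ σ`. This is what makes `q_Σ` locally trivial near the points vanishing exactly on `σ`. -/
def Splits (N : Fin r → Fin n → ℤ) (K : Set (Finset (Fin r))) : Prop :=
  ∀ σ ∈ K, ∃ B : (Fin n → ℤ) →ₗ[ℤ] Fin r → ℤ,
    Fintype.linearCombination ℤ N ∘ₗ B = LinearMap.id ∧ ∀ k ∈ σ, B (N k) = Pi.single k 1

lemma surjective_linearCombination (h2 : Cond2 N) :
    Function.Surjective (Fintype.linearCombination ℤ N) :=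
  LinearMap.range_eq_top.1 ((Fintype.range_linearCombination ℤ N).trans h2)

lemma splits_KC (hPG : IsPrimGens F N) (hNS : F.NonSingular) (h2 : Cond2 N) :
    Splits N (KC F N) := by
  intro σ hσ
  obtain ⟨b, hb⟩ := exists_basis_of_mem_KC hPG hNS hσ
  have hw : ∀ l, ∃ w : Fin r → ℤ, Fintype.linearCombination ℤ N w = b l ∧
      ∀ i ∈ σ, N i = b l → w = Pi.single i 1 := by
    intro l
    by_cases h : ∃ i ∈ σ, N i = b l
    · obtain ⟨i, -, hil⟩ := h
      refine ⟨Pi.single i 1, by simp [hil], fun j _ hjl => ?_⟩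
      rw [hPG.inj (hil.trans hjl.symm)]
    · obtain ⟨w, hw⟩ := surjective_linearCombination h2 (b l)
      exact ⟨w, hw, fun i hi hil => (h ⟨i, hi, hil⟩).elim⟩
  choose w hw hwσ using hw
  refine ⟨b.constr ℤ w, b.ext fun l => by simp [hw], fun i hi => ?_⟩
  obtain ⟨l, hl⟩ := hb i hi
  rw [hl, Module.Basis.constr_basis, hwσ l i hi hl]

end FanCombinatorics

/-! ### The torus bundle `U(K) → X_Σ` -/

section MonomialHom

variable {G ι κ ν : Type*} [CommGroup G]

lemma zpow_sum (x : G) (s : Finset ι) (a : ι → ℤ) : x ^ ∑ i ∈ s, a i = ∏ i ∈ s, x ^ a i := by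
  induction s using Finset.cons_induction with
  | empty => simp
  | cons i s hi ih => rw [Finset.sum_cons, Finset.prod_cons, zpow_add, ih]

variable [Fintype ι]

/-- The homomorphism of tori `G^ι → G^κ` whose `j`-th coordinate is the monomial
`∏ k, u k ^ a k j`. -/
def monomialHom (a : ι → κ → ℤ) : (ι → G) →* (κ → G) where
  toFun u j := ∏ k, u k ^ a k j
  map_one' := by ext; simp
  map_mul' u v := by ext; simp [mul_zpow, Finset.prod_mul_distrib]

lemma monomialHom_apply (a : ι → κ → ℤ) (u : ι → G) (j : κ) :
    monomialHom a u j = ∏ k, u k ^ a k j := rfl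

lemma monomialHom_monomialHom [Fintype κ] (a : ι → κ → ℤ) (b : κ → ν → ℤ) (u : ι → G) :
    monomialHom b (monomialHom a u) =
      monomialHom (fun k => Fintype.linearCombination ℤ b (a k)) u := by
  ext j
  simp only [monomialHom_apply, Fintype.linearCombination_apply, Finset.sum_apply, Pi.smul_apply,
    smul_eq_mul, zpow_sum, zpow_mul]
  rw [Finset.prod_comm]
  simp only [Finset.prod_zpow]

lemma monomialHom_congr {a : ι → κ → ℤ} {u v : ι → G} (h : ∀ k, a k = 0 ∨ u k = v k) :
    monomialHom a u = monomialHom a v := funext fun j => Finset.prod_congr rfl fun k _ => by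
  rcases h k with h | h <;> simp [h]

lemma continuousOn_monomialHom [TopologicalSpace G] [IsTopologicalGroup G] {Y : Type*}
    [TopologicalSpace Y] {S : Set Y} {a : ι → κ → ℤ} {f : Y → ι → G}
    (hf : ∀ k, a k = 0 ∨ ContinuousOn (fun y => f y k) S) :
    ContinuousOn (fun y => monomialHom a (f y)) S := by
  refine continuousOn_pi.2 fun j => continuousOn_finsetProd _ fun k _ => ?_
  rcases hf k with h | h
  · simp only [h, Pi.zero_apply, zpow_zero]
    exact continuousOn_const
  · exact h.zpow _

@[fun_prop]
lemma continuous_monomialHom [TopologicalSpace G] [IsTopologicalGroup G] (a : ι → κ → ℤ) :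
    Continuous (monomialHom a : (ι → G) → κ → G) :=
  continuousOn_univ.1 (continuousOn_monomialHom fun _ => Or.inr (by fun_prop))

lemma monomialHom_sub (a b : ι → κ → ℤ) (u : ι → G) :
    monomialHom (a - b) u = monomialHom a u / monomialHom b u := by
  ext j
  simp [monomialHom_apply, zpow_sub, Finset.prod_mul_distrib, div_eq_mul_inv]

lemma monomialHom_single [DecidableEq ι] (u : ι → G) :
    monomialHom (fun k => Pi.single k 1) u = u := by
  ext j
  rw [monomialHom_apply, Finset.prod_eq_single j] <;> simp +contextual [eq_comm]

end MonomialHom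

section Torus

variable {n r : ℕ} {N : Fin r → Fin n → ℤ} {K : Set (Finset (Fin r))} {σ : Finset (Fin r)}

/-- The group `G_Σ`, as a subgroup of the torus `(ℂˣ)^r`. -/
def torus (N : Fin r → Fin n → ℤ) : Subgroup (Fin r → ℂˣ) := (monomialHom N).ker

lemma coe_mem_GSet_iff {u : Fin r → ℂˣ} : (fun k => (u k : ℂ)) ∈ GSet N ↔ u ∈ torus N := by
  have h (m : Fin n → ℤ) : ∏ k, (u k : ℂ) ^ ∑ j, N k j * m j =
      (monomialHom (fun j (_ : Unit) => m j) (monomialHom N u) () : ℂˣ) := by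
    rw [monomialHom_monomialHom]
    simp [monomialHom_apply, Fintype.linearCombination_apply]
  constructor
  · rintro ⟨-, hu⟩
    refine MonoidHom.mem_ker.2 (funext fun j => Units.ext ?_)
    have := hu (Pi.single j 1)
    simpa [monomialHom_apply, Pi.single_apply] using this
  · exact fun hu => ⟨fun k => (u k).ne_zero, fun m => by
      rw [h, MonoidHom.mem_ker.1 hu, map_one, Pi.one_apply, Units.val_one]⟩

lemma Splits.exists_retraction (hs : Splits N K) (hσ : σ ∈ K) : ∃ a : Fin r → Fin r → ℤ,
    (∀ u : Fin r → ℂˣ, monomialHom a u ∈ torus N) ∧ (∀ u ∈ torus N, monomialHom a u = u) ∧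
      ∀ k ∈ σ, a k = 0 := by
  obtain ⟨B, hB, hBσ⟩ := hs σ hσ
  refine ⟨(fun k => Pi.single k 1) - fun k => B (N k), fun u => MonoidHom.mem_ker.2 ?_,
    fun u hu => ?_, fun k hk => by simp [hBσ k hk]⟩
  · have hNB (v : Fin n → ℤ) : Fintype.linearCombination ℤ N (B v) = v := LinearMap.congr_fun hB v
    rw [monomialHom_monomialHom]
    ext j
    simp [monomialHom_apply, hNB]
  · obtain ⟨b, hb⟩ : ∃ b : Fin n → Fin r → ℤ, ∀ v, B v = Fintype.linearCombination ℤ b v :=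
      ⟨_, LinearMap.pi_apply_eq_sum_univ B⟩
    simp only [hb]
    rw [monomialHom_sub, monomialHom_single, ← monomialHom_monomialHom,
      MonoidHom.mem_ker.1 hu, map_one, div_one]

instance : MulAction (Fin r → ℂˣ) ↥(UK K) where
  smul u x := ⟨fun k => u k * x.1 k, mem_UK.2 fun σ hσ =>
    (mem_UK.1 x.2 σ hσ).imp fun k hk => ⟨hk.1, mul_ne_zero (u k).ne_zero hk.2⟩⟩
  one_smul _ := Subtype.ext (funext fun _ => one_mul _)
  mul_smul _ _ _ := Subtype.ext (funext fun _ => mul_assoc _ _ _)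

instance : ContinuousSMul (Fin r → ℂˣ) ↥(UK K) where
  continuous_smul := by
    refine Continuous.subtype_mk (continuous_pi fun k => ?_) _
    exact (Units.continuous_val.comp ((continuous_apply k).comp continuous_fst)).mul
      ((continuous_apply k).comp (continuous_subtype_val.comp continuous_snd))

lemma toricRel_iff {x y : ↥(UK K)} : toricRel N K x y ↔ ∃ g : torus N, g • x = y := by
  constructor
  · rintro ⟨μ, hμ, h⟩
    exact ⟨⟨fun k => Units.mk0 (μ k) (hμ.1 k), coe_mem_GSet_iff.1 (by simpa using hμ)⟩,
      Subtype.ext h⟩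
  · rintro ⟨g, rfl⟩
    exact ⟨_, coe_mem_GSet_iff.2 g.2, rfl⟩

lemma qmap_eq_qmap_iff {x y : ↥(UK K)} :
    qmap N K x = qmap N K y ↔ ∃ g : torus N, g • x = y := by
  have hrel : ∀ x y, toricRel N K x y ↔ MulAction.orbitRel (torus N) ↥(UK K) y x := fun x y =>
    toricRel_iff.trans MulAction.mem_orbit_iff.symm
  have heqv : Equivalence (toricRel N K) :=
    ⟨fun x => (hrel x x).2 (Setoid.refl' _ x),
      fun h => (hrel _ _).2 (Setoid.symm' _ ((hrel _ _).1 h)),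
      fun h h' => (hrel _ _).2 (Setoid.trans' _ ((hrel _ _).1 h') ((hrel _ _).1 h))⟩
  exact (Quot.eq.trans heqv.eqvGen_iff).trans toricRel_iff

/-- The invertible elements of `ℂ` as units; `0` has the junk value `1`. -/
def unitPart (z : ℂ) : ℂˣ := if h : z = 0 then 1 else Units.mk0 z h

lemma coe_unitPart {z : ℂ} (hz : z ≠ 0) : (unitPart z : ℂ) = z := by
  rw [unitPart, dif_neg hz, Units.val_mk0]

lemma unitPart_mul (u : ℂˣ) {z : ℂ} (hz : z ≠ 0) : unitPart (u * z) = u * unitPart z :=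
  Units.ext (by rw [Units.val_mul, coe_unitPart hz, coe_unitPart (mul_ne_zero u.ne_zero hz)])

lemma continuousOn_unitPart : ContinuousOn unitPart {0}ᶜ :=
  Units.isEmbedding_val₀.continuousOn_iff.2 (continuousOn_id.congr fun _ hz => coe_unitPart hz)

lemma Splits.isPrincipalBundle (hs : Splits N K) : IsPrincipalBundle (torus N) (qmap N K) where
  isQuotientMap := isQuotientMap_quot_mk
  apply_eq_apply_iff := qmap_eq_qmap_iff
  exists_equivariant x := by
    obtain ⟨a, ha, ha', haσ⟩ := hs.exists_retraction (filter_eq_zero_mem_of_mem_UK x.2)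
    replace haσ : ∀ k, x.1 k = 0 → a k = 0 := fun k hk => haσ k (by simp [hk])
    let W : Set ↥(UK K) := {y | ∀ k, x.1 k ≠ 0 → y.1 k ≠ 0}
    have hW : W = ⋂ k, ⋂ (_ : x.1 k ≠ 0), {y | y.1 k ≠ 0} := by ext y; simp [W]
    refine ⟨W, fun y => ⟨monomialHom a fun k => unitPart (y.1 k), ha _⟩, ?_, fun k hk => hk, ?_,
      fun g y hy => ⟨fun k hk => mul_ne_zero (g.1 k).ne_zero (hy k hk), ?_⟩⟩
    · rw [hW]
      exact isOpen_iInter_of_finite fun k => isOpen_iInter_of_finite fun _ =>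
        isOpen_ne_fun ((continuous_apply k).comp continuous_subtype_val) continuous_const
    · exact Topology.IsInducing.subtypeVal.continuousOn_iff.2 <| continuousOn_monomialHom fun k =>
        (eq_or_ne (x.1 k) 0).imp (haσ k) fun hk => continuousOn_unitPart.comp
          ((continuous_apply k).comp continuous_subtype_val).continuousOn fun y hy => hy k hk
    · refine Subtype.ext ?_
      calc monomialHom a (fun k => unitPart (g.1 k * y.1 k))
          = monomialHom a (g.1 * fun k => unitPart (y.1 k)) := monomialHom_congr fun k =>
            (eq_or_ne (x.1 k) 0).imp (haσ k) fun hk => unitPart_mul _ (hy k hk)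
        _ = g.1 * monomialHom a fun k => unitPart (y.1 k) := by rw [map_mul, ha' _ g.2]

/-- The exponential map `ℂ^ι → (ℂˣ)^ι`. -/
def expUnits {ι : Type*} (z : ι → ℂ) : ι → ℂˣ := fun k => Units.mk0 _ (Complex.exp_ne_zero (z k))

@[fun_prop]
lemma continuous_expUnits {ι : Type*} : Continuous (expUnits : (ι → ℂ) → ι → ℂˣ) :=
  continuous_pi fun k => Units.isEmbedding_val₀.continuous_iff.2
    (Complex.continuous_exp.comp (continuous_apply k))

lemma Splits.exists_extension (hs : Splits N K) (hE : ∅ ∈ K) {Y : Type*} [TopologicalSpace Y]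
    [NormalSpace Y] {A : Set Y} (hA : IsClosed A) (hlog : HasLogs A) {δ : Y → torus N}
    (hδ : ContinuousOn δ A) : ∃ Δ : C(Y, torus N), Set.EqOn Δ δ A := by
  obtain ⟨a, ha, ha', -⟩ := hs.exists_retraction hE
  have hval (k : Fin r) : Continuous fun u : torus N => (u.1 k : ℂ) :=
    Units.continuous_val.comp ((continuous_apply k).comp continuous_subtype_val)
  choose z hz hze using fun k => hlog ((hval k).comp_continuousOn hδ) fun y _ => ((δ y).1 k).ne_zero
  have hZ : ∀ k, ∃ Z : C(Y, ℂ), Set.EqOn Z (z k) A := fun k => by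
    obtain ⟨Z, hZ⟩ := ContinuousMap.exists_restrict_eq hA
      ⟨A.domRestrict (z k), continuousOn_iff_continuous_domRestrict.1 (hz k)⟩
    exact ⟨Z, fun y hy => DFunLike.congr_fun hZ ⟨y, hy⟩⟩
  choose Z hZ using hZ
  refine ⟨⟨fun y => ⟨monomialHom a (expUnits fun k => Z k y), ha _⟩, by fun_prop⟩,
    fun y hy => Subtype.ext ?_⟩
  have hexp : expUnits (fun k => Z k y) = (δ y).1 :=
    funext fun k => Units.ext ((congrArg Complex.exp (hZ k hy)).trans (hze k y hy))
  exact (congrArg _ hexp).trans (ha' _ (δ y).2)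

lemma Splits.liftsRel (hs : Splits N K) (hE : ∅ ∈ K) {ι : Type*} [Finite ι]
    {A : Set (ι → unitInterval)} (hA : IsClosed A) (hlog : HasLogs A) :
    LiftsRel (qCont N K) A :=
  IsPrincipalBundle.liftsRel (q := qCont N K) hs.isPrincipalBundle
    fun _ hδ => hs.exists_extension hE hA hlog hδ

end Torus

/-! ### The fundamental group of the base of a lifting map -/

section Monodromy

open scoped unitInterval

variable {E B : Type*} [TopologicalSpace E] [TopologicalSpace B] {q : C(E, B)} {e₀ : E}
  {D : Type*} [AddGroup D]

/-- A classification of the path components of the fibre of `q` through `e₀` by the group `D`,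
compatible with enough fibre-preserving self-maps of `E` to move `e₀` to any point of the fibre. -/
structure IsFibreDegree (q : C(E, B)) (e₀ : E) (deg : q ⁻¹' {q e₀} → D) : Prop where
  surjective : Function.Surjective deg
  joined_iff : ∀ e e' : q ⁻¹' {q e₀}, Joined e e' ↔ deg e = deg e'
  exists_translation : ∀ e : q ⁻¹' {q e₀}, ∃ τ : C(E, E), (∀ x, q (τ x) = q x) ∧ τ e₀ = e ∧
    ∀ e' e'' : q ⁻¹' {q e₀}, (e'' : E) = τ e' → deg e'' = deg e' + deg e

/-- The loop in `B` below a path in `E` from `e₀` to another point of its fibre. -/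
def loopBelow {e : q ⁻¹' {q e₀}} (γ : Path e₀ (e : E)) : Path (q e₀) (q e₀) :=
  (γ.map q.continuous).cast rfl e.2.symm

lemma exists_loopBelow_eq (hq : LiftsRel q {x : Unit → I | x () = 0})
    (p : Path (q e₀) (q e₀)) :
    ∃ (e : q ⁻¹' {q e₀}) (γ : Path e₀ (e : E)), loopBelow γ = p := by
  obtain ⟨F, hF, hF₀⟩ := hq ⟨fun x => p (x ()), by fun_prop⟩ (g := fun _ => e₀)
    continuousOn_const fun x (hx : x () = 0) => by simp [hx]
  refine ⟨⟨F fun _ => 1, (hF _).trans p.target⟩,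
    ⟨⟨fun t => F fun _ => t, by fun_prop⟩, hF₀ rfl, rfl⟩, ?_⟩
  ext t
  exact hF _

lemma joined_of_loopBelow_homotopic (hq : LiftsRel q (cylinder {x : Unit → I | x () = 0}))
    {e e' : q ⁻¹' {q e₀}} {γ : Path e₀ (e : E)} {γ' : Path e₀ (e' : E)}
    (h : (loopBelow γ).Homotopic (loopBelow γ')) : Joined e e' := by
  obtain ⟨H⟩ := h
  let ev : C(Unit → I, I) := ⟨fun x => x (), by fun_prop⟩
  have hev : Set.EqOn (γ.toContinuousMap.comp ev) (γ'.toContinuousMap.comp ev)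
      {x : Unit → I | x () = 0} := fun x (hx : x () = 0) => by simp [ev, hx]
  obtain ⟨M, hM⟩ := hq.exists_homotopyRel (isClosed_face () 0) hev
    { toFun := fun x => H (x.1, x.2 ())
      continuous_toFun := by fun_prop
      map_zero_left := fun x => H.map_zero_left _
      map_one_left := fun x => H.map_one_left _
      prop' := fun t x (hx : x () = 0) => H.eq_fst t (Or.inl hx) }
  refine ⟨⟨⟨fun t => ⟨M (t, fun _ => 1), (hM _).trans (H.target t)⟩, by fun_prop⟩, ?_, ?_⟩⟩
  · exact Subtype.ext ((M.map_zero_left _).trans γ.target)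
  · exact Subtype.ext ((M.map_one_left _).trans γ'.target)

lemma loopBelow_homotopic_of_joined [SimplyConnectedSpace E] {e e' : q ⁻¹' {q e₀}}
    (h : Joined e e') (γ : Path e₀ (e : E)) (γ' : Path e₀ (e' : E)) :
    (loopBelow γ).Homotopic (loopBelow γ') := by
  obtain ⟨ρ⟩ := h
  have hρ : loopBelow (γ.trans (ρ.map continuous_subtype_val)) =
      (loopBelow γ).trans (Path.refl _) := by
    have hρq (s : I) : q (ρ s : E) = q e₀ := (ρ s).2
    ext t
    simp [loopBelow, Path.trans_apply, hρq]
  have hE : (γ.trans (ρ.map continuous_subtype_val)).Homotopic γ' :=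
    SimplyConnectedSpace.paths_homotopic _ _
  have hB : (loopBelow (γ.trans (ρ.map continuous_subtype_val))).Homotopic (loopBelow γ') :=
    (hE.map q).elim fun H => ⟨H⟩
  exact (Path.Homotopic.trans ⟨(Path.Homotopy.transRefl _).symm⟩ (hρ ▸ hB))

lemma loopBelow_trans {e e' : q ⁻¹' {q e₀}} (γ : Path e₀ (e : E)) (γ' : Path e₀ (e' : E))
    {τ : C(E, E)} (hτq : ∀ x, q (τ x) = q x) (hτ : τ e₀ = e) :
    loopBelow (e := ⟨τ e', (hτq _).trans e'.2⟩)
        (γ.trans ((γ'.map τ.continuous).cast hτ.symm rfl)) =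
      (loopBelow γ).trans (loopBelow γ') := by
  ext t
  simp [loopBelow, Path.trans_apply, hτq]

lemma IsFibreDegree.nonempty_mulEquiv [SimplyConnectedSpace E] {deg : q ⁻¹' {q e₀} → D}
    (hdeg : IsFibreDegree q e₀ deg) (hq₁ : LiftsRel q {x : Unit → I | x () = 0})
    (hq₂ : LiftsRel q (cylinder {x : Unit → I | x () = 0})) :
    Nonempty (FundamentalGroup B (q e₀) ≃* Multiplicative D) := by
  have hlift : ∀ a : FundamentalGroup B (q e₀), ∃ (e : q ⁻¹' {q e₀}) (γ : Path e₀ (e : E)),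
      (⟦loopBelow γ⟧ : Path.Homotopic.Quotient _ _) = a := by
    rintro ⟨p⟩
    obtain ⟨e, γ, h⟩ := exists_loopBelow_eq hq₁ p
    exact ⟨e, γ, congrArg _ h⟩
  choose e γ hγ using hlift
  have hdeg_eq {a : FundamentalGroup B (q e₀)} {e' : q ⁻¹' {q e₀}} (γ' : Path e₀ (e' : E))
      (h : (⟦loopBelow γ'⟧ : Path.Homotopic.Quotient _ _) = a) : deg (e a) = deg e' :=
    (hdeg.joined_iff _ _).1 <| joined_of_loopBelow_homotopic hq₂ <|
      Quotient.exact ((hγ a).trans h.symm)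
  refine ⟨MulEquiv.ofBijective (⟨fun a => .ofAdd (deg (e a)), fun a b => ?_⟩ :
    FundamentalGroup B (q e₀) →ₙ* Multiplicative D) ⟨fun a b h => ?_, fun d => ?_⟩⟩
  · obtain ⟨τ, hτq, hτ, hτdeg⟩ := hdeg.exists_translation (e b)
    have hab : (⟦loopBelow _⟧ : Path.Homotopic.Quotient _ _) = a * b :=
      (congrArg _ (loopBelow_trans (γ b) (γ a) hτq hτ)).trans
        (congrArg₂ Path.Homotopic.Quotient.trans (hγ b) (hγ a))
    exact congrArg Multiplicative.ofAdd ((hdeg_eq _ hab).trans (hτdeg _ _ rfl))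
  · rw [← hγ a, ← hγ b]
    exact Quotient.sound (loopBelow_homotopic_of_joined ((hdeg.joined_iff _ _).2 h) _ _)
  · obtain ⟨e', he'⟩ := hdeg.surjective d.toAdd
    let γ' : Path e₀ (e' : E) := PathConnectedSpace.somePath _ _
    exact ⟨⟦loopBelow γ'⟧, congrArg Multiplicative.ofAdd ((hdeg_eq γ' rfl).trans he')⟩

end Monodromy

/-! ### The second homotopy group and the loop space -/

section LoopShift

open scoped unitInterval

variable {X : Type*} [TopologicalSpace X] (x₀ : X)

lemma exists_genLoop_homeomorph_loop (ι : Type*) [Unique ι] :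
    ∃ h : GenLoop ι X x₀ ≃ₜ Loop X x₀, ∀ p t, (h p).at t = p fun _ => t := by
  obtain ⟨F, hF⟩ := exists_loop_curry (Y := GenLoop ι X x₀) (z₀ := x₀)
    ⟨fun x => x.1 fun _ => x.2, by fun_prop⟩ fun p t ht => p.2 _ ⟨default, ht⟩
  let G : C(Loop X x₀ × (ι → I), X) :=
    ⟨fun x => x.1.at (x.2 default), continuous_loop_at.comp
      (continuous_fst.prodMk ((continuous_apply default).comp continuous_snd))⟩
  have hG (γ : Loop X x₀) : G.curry γ ∈ GenLoop ι X x₀ := fun y ⟨i, hi⟩ =>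
    γ.at_of_endpoint (Unique.eq_default i ▸ hi)
  refine ⟨⟨⟨F, fun γ => ⟨G.curry γ, hG γ⟩, fun p => ?_, fun γ => ?_⟩, F.continuous,
    G.curry.continuous.subtype_mk hG⟩, hF⟩
  · refine GenLoop.ext _ _ fun y => (hF p _).trans (congrArg p ?_)
    exact funext fun j => congrArg y (Unique.default_eq j)
  · exact Loop.ext_at fun t => hF _ t

lemma nonempty_pi_two_mulEquiv_fundamentalGroup_loop :
    Nonempty (HomotopyGroup (Fin 2) X x₀ ≃* FundamentalGroup (Loop X x₀) (Loop.const x₀)) := by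
  let i : Fin 2 := Classical.arbitrary _
  obtain ⟨_⟩ : Nonempty (Unique {j : Fin 2 // j ≠ i}) :=
    Fintype.card_eq_one_iff_nonempty_unique.1 (by simp)
  obtain ⟨h, hh⟩ := exists_genLoop_homeomorph_loop x₀ {j : Fin 2 // j ≠ i}
  have hconst : h GenLoop.const = Loop.const x₀ := Loop.ext_at fun t => hh _ t
  have e := (FundamentalGroupoidFunctor.equivOfHomotopyEquiv
    h.toHomotopyEquiv).fullyFaithfulFunctor.mulEquivEnd ⟨GenLoop.const⟩
  exact ⟨((homotopyGroupEquivFundamentalGroup i).mulEquiv).trans (hconst ▸ e)⟩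

end LoopShift

/-! ### Periods of the torus -/

section Winding

open scoped unitInterval

variable {n r : ℕ} {N : Fin r → Fin n → ℤ} {K : Set (Finset (Fin r))} {hE : ∅ ∈ K}

lemma sub_eq_sub_of_expUnits_eq {Y ι : Type*} [TopologicalSpace Y] [PreconnectedSpace Y]
    {z w : Y → ι → ℂ} (hz : Continuous z) (hw : Continuous w)
    (h : ∀ y, expUnits (z y) = expUnits (w y)) (x y : Y) : z x - w x = z y - w y :=
  funext fun k => sub_eq_sub_of_exp_eqOn isPreconnected_univ
    ((continuous_apply k).comp hz).continuousOn ((continuous_apply k).comp hw).continuousOn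
    (fun y _ => congrArg Units.val (congr_fun (h y) k)) trivial trivial

lemma expUnits_add {ι : Type*} (z w : ι → ℂ) : expUnits (z + w) = expUnits z * expUnits w :=
  funext fun _ => Units.ext (Complex.exp_add _ _)

lemma expUnits_zero {ι : Type*} : expUnits (0 : ι → ℂ) = 1 :=
  funext fun _ => Units.ext Complex.exp_zero

/-- The lattice of integral relations `∑ k, d k • N k = 0` between the vectors `N k`. -/
def relationLattice (N : Fin r → Fin n → ℤ) : Submodule ℤ (Fin r → ℤ) :=
  LinearMap.ker (Fintype.linearCombination ℤ N)

/-- The Lie algebra of `torus N`: the complex relations between the vectors `N k`. -/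
def lieTorus (N : Fin r → Fin n → ℤ) : Submodule ℂ (Fin r → ℂ) :=
  LinearMap.ker (Fintype.linearCombination ℂ fun k j => (N k j : ℂ))

lemma monomialHom_expUnits (z : Fin r → ℂ) : monomialHom N (expUnits z) =
    expUnits (Fintype.linearCombination ℂ (fun k j => (N k j : ℂ)) z) := by
  ext j
  simp [monomialHom_apply, expUnits, Fintype.linearCombination_apply, Complex.exp_sum,
    ← Complex.exp_int_mul, mul_comm]

lemma expUnits_mem_torus {z : Fin r → ℂ} (hz : z ∈ lieTorus N) : expUnits z ∈ torus N :=
  MonoidHom.mem_ker.2 <| by rw [monomialHom_expUnits, LinearMap.mem_ker.1 hz, expUnits_zero]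

lemma mem_lieTorus_of_expUnits_mem_torus {Y : Type*} [TopologicalSpace Y] [PreconnectedSpace Y]
    {z : Y → Fin r → ℂ} (hz : Continuous z) (h : ∀ y, expUnits (z y) ∈ torus N) {y₀ : Y}
    (h₀ : z y₀ = 0) (y : Y) : z y ∈ lieTorus N := by
  let L := Fintype.linearCombination ℂ fun k j => (N k j : ℂ)
  have hL : ∀ y, expUnits (L (z y)) = expUnits 0 := fun y => by
    rw [← monomialHom_expUnits, MonoidHom.mem_ker.1 (h y), expUnits_zero]
  have := sub_eq_sub_of_expUnits_eq (L.continuous_of_finiteDimensional.comp hz)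
    continuous_const hL y y₀
  exact LinearMap.mem_ker.2 (by simpa [h₀] using this)

lemma mul_two_pi_I_mem_lieTorus_iff {d : Fin r → ℤ} :
    (fun k => d k * (2 * Real.pi * Complex.I)) ∈ lieTorus N ↔ d ∈ relationLattice N := by
  have h (j : Fin n) : Fintype.linearCombination ℂ (fun k j => (N k j : ℂ))
      (fun k => d k * (2 * Real.pi * Complex.I)) j =
        Fintype.linearCombination ℤ N d j * (2 * Real.pi * Complex.I) := by
    simp only [Fintype.linearCombination_apply, Finset.sum_apply, Pi.smul_apply, smul_eq_mul,
      Int.cast_sum, Int.cast_mul, Finset.sum_mul]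
    exact Finset.sum_congr rfl fun k _ => by ring
  simp [lieTorus, relationLattice, funext_iff, h]

/-- The inclusion `d ↦ 2πi d` of the relation lattice into `lieTorus N` as the kernel of the
exponential map to `torus N`. -/
def period (N : Fin r → Fin n → ℤ) : relationLattice N →+ lieTorus N where
  toFun d := ⟨fun k => d.1 k * (2 * Real.pi * Complex.I), mul_two_pi_I_mem_lieTorus_iff.2 d.2⟩
  map_zero' := by ext; simp
  map_add' d d' := by ext; simp [add_mul]

lemma period_injective : Function.Injective (period N) := fun d d' h => by
  ext k
  have := congr_fun (congrArg Subtype.val h) k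
  simpa [period, Complex.two_pi_I_ne_zero] using this

lemma exists_period_eq_iff {z : lieTorus N} : (∃ d, period N d = z) ↔ expUnits z.1 = 1 := by
  have h : expUnits z.1 = 1 ↔ ∃ d : Fin r → ℤ, ∀ k, z.1 k = d k * (2 * Real.pi * Complex.I) := by
    simp [funext_iff, Units.ext_iff, expUnits, Complex.exp_eq_one_iff, Classical.skolem]
  rw [h]
  constructor
  · rintro ⟨d, rfl⟩
    exact ⟨d.1, fun _ => rfl⟩
  · rintro ⟨d, hd⟩
    have hz : z.1 = fun k => d k * (2 * Real.pi * Complex.I) := funext hd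
    exact ⟨⟨d, mul_two_pi_I_mem_lieTorus_iff.1 (hz ▸ z.2)⟩, Subtype.ext hz.symm⟩

end Winding

/-! ### Winding numbers of loops in the torus -/

section Winding

open scoped unitInterval

variable {n r : ℕ} {N : Fin r → Fin n → ℤ} {K : Set (Finset (Fin r))} {hE : ∅ ∈ K}

/-- The map `Ω q_Σ : Ω U(K_Σ) → Ω X_Σ`. -/
def loopQ (N : Fin r → Fin n → ℤ) (hE : ∅ ∈ K) :
    C(Loop ↥(UK K) (onesUK hE), Loop (XS N K) (baseX N K hE)) :=
  loopMap (qCont N K) rfl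

/-- The fibre of `Ω q_Σ` over the constant loop. -/
abbrev loopFibre (N : Fin r → Fin n → ℤ) (hE : ∅ ∈ K) : Set (Loop ↥(UK K) (onesUK hE)) :=
  loopQ N hE ⁻¹' {loopQ N hE (Loop.const _)}

lemma mem_loopFibre_iff {γ : Loop ↥(UK K) (onesUK hE)} :
    γ ∈ loopFibre N hE ↔ ∀ t, ∃ g ∈ torus N, γ.at t = g • onesUK hE := by
  have h : γ ∈ loopFibre N hE ↔ ∀ t, qmap N K (onesUK hE) = qmap N K (γ.at t) :=
    ⟨fun h t => congrArg (Loop.at · t) h.symm, fun h => Loop.ext_at fun t => (h t).symm⟩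
  simp only [h, qmap_eq_qmap_iff]
  exact forall_congr' fun t =>
    ⟨fun ⟨g, hg⟩ => ⟨g, g.2, hg.symm⟩, fun ⟨g, hg, h⟩ => ⟨⟨g, hg⟩, h.symm⟩⟩

lemma smul_onesUK_apply (u : Fin r → ℂˣ) (k : Fin r) : (u • onesUK hE).1 k = u k := mul_one _

lemma smul_onesUK_injective : Function.Injective fun u : Fin r → ℂˣ => u • onesUK hE :=
  fun u v h => funext fun k => Units.ext <| by
    rw [← smul_onesUK_apply (hE := hE), ← smul_onesUK_apply (hE := hE)]
    exact congr_fun (congrArg Subtype.val h) k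

/-- `γ` is the image under the exponential map of a path in `lieTorus N` from `0` to the
period `d`. -/
def HasWinding (γ : Loop ↥(UK K) (onesUK hE)) (d : relationLattice N) : Prop :=
  ∃ z : C(I, lieTorus N), z 0 = 0 ∧ z 1 = period N d ∧ ∀ t, γ.at t = expUnits (z t).1 • onesUK hE

lemma exists_loopFibre_expUnits {Y : Type*} [TopologicalSpace Y] (z : C(Y × I, lieTorus N))
    (hz : ∀ y t, t = 0 ∨ t = 1 → expUnits (z (y, t)).1 = 1) :
    ∃ p : C(Y, loopFibre N hE), ∀ y t, (p y).1.at t = expUnits (z (y, t)).1 • onesUK hE := by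
  obtain ⟨p, hp⟩ := exists_loop_curry (z₀ := onesUK hE)
    ⟨fun x => expUnits (z x).1 • onesUK hE, by fun_prop⟩ fun y t ht => by
      simp [hz y t ht]
  exact ⟨⟨fun y => ⟨p y, mem_loopFibre_iff.2 fun t =>
    ⟨_, expUnits_mem_torus (z (y, t)).2, hp y t⟩⟩, p.continuous.subtype_mk _⟩, hp⟩

lemma exists_expUnits_eq_of_path (p : C(I, loopFibre N hE)) : ∃ z : C(I × I, lieTorus N),
    (∀ s, z (s, 0) = 0) ∧ ∀ s t, (p s).1.at t = expUnits (z (s, t)).1 • onesUK hE := by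
  have hp : Continuous fun x : I × I => (p x.1).1.at x.2 :=
    continuous_loop_at.comp (by fun_prop : Continuous fun x : I × I => ((p x.1).1, x.2))
  have hlog : HasLogs (Set.univ : Set (I × I)) :=
    (hasLogs_singleton 0).of_deformation (Set.subset_univ _)
      (H := fun x => (x.1 * x.2.1, x.1 * x.2.2)) (by fun_prop) (by simp) (by simp) (by simp)
  choose g hg hpg using fun x : I × I => mem_loopFibre_iff.1 (p x.1).2 x.2
  have hpg' (x : I × I) (k : Fin r) : ((p x.1).1.at x.2).1 k = g x k := by
    rw [hpg x, smul_onesUK_apply]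
  choose L hL hLe using fun k => hlog
    ((continuous_apply k).comp (continuous_subtype_val.comp hp)).continuousOn
    fun x _ => (hpg' x k).trans_ne (g x k).ne_zero
  simp only [continuousOn_univ] at hL
  let z (x : I × I) : Fin r → ℂ := fun k => L k x - L k (x.1, 0)
  have hz : Continuous z := continuous_pi fun k => by have := hL k; fun_prop
  have hze (x : I × I) : expUnits (z x) = g x := funext fun k => Units.ext <| by
    have h₀ : ((p x.1).1.at 0).1 k = 1 := by rw [Loop.at_of_endpoint _ (Or.inl rfl)]; rfl
    calc Complex.exp (L k x - L k (x.1, 0))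
        = ((p x.1).1.at x.2).1 k / ((p x.1).1.at 0).1 k := by
          rw [Complex.exp_sub, hLe k x trivial, hLe k _ trivial]; rfl
      _ = g x k := by rw [h₀, div_one, hpg']
  have hz₀ (s : I) : z (s, 0) = 0 := funext fun k => sub_self _
  refine ⟨⟨fun x => ⟨z x, mem_lieTorus_of_expUnits_mem_torus hz (fun y => ?_) (hz₀ 0) x⟩,
    hz.subtype_mk _⟩, fun s => Subtype.ext (hz₀ s), fun s t => ?_⟩
  · exact hze y ▸ hg y
  · exact (hpg (s, t)).trans (congrArg (· • onesUK hE) (hze (s, t)).symm)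

lemma exists_hasWinding (γ : loopFibre N hE) : ∃ d : relationLattice N, HasWinding γ.1 d := by
  obtain ⟨z, hz₀, hz⟩ := exists_expUnits_eq_of_path (.const I γ)
  obtain ⟨d, hd⟩ : ∃ d, period N d = z (0, 1) := exists_period_eq_iff.2 <|
    funext fun k => Units.ext <| by
      rw [← smul_onesUK_apply (hE := hE), ← hz 0 1, Loop.at_of_endpoint _ (Or.inr rfl)]
      rfl
  exact ⟨d, ⟨fun t => z (0, t), by fun_prop⟩, hz₀ 0, hd.symm, hz 0⟩

lemma HasWinding.eq_period {γ : Loop ↥(UK K) (onesUK hE)} {d : relationLattice N}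
    (h : HasWinding γ d) {w : C(I, lieTorus N)} (hw₀ : w 0 = 0)
    (hw : ∀ t, γ.at t = expUnits (w t).1 • onesUK hE) : w 1 = period N d := by
  obtain ⟨z, hz₀, hz₁, hz⟩ := h
  have hwz : (w 1).1 - (z 1).1 = (w 0).1 - (z 0).1 :=
    sub_eq_sub_of_expUnits_eq (z := fun t => (w t).1) (w := fun t => (z t).1) (by fun_prop)
      (by fun_prop) (fun t => smul_onesUK_injective ((hw t).symm.trans (hz t))) 1 0
  rw [hw₀, hz₀, sub_self, sub_eq_zero] at hwz
  rw [← hz₁, Subtype.ext hwz]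

lemma HasWinding.eq_of_joined {γ γ' : loopFibre N hE} {d d' : relationLattice N}
    (h : HasWinding γ.1 d) (h' : HasWinding γ'.1 d') (hγ : Joined γ γ') : d = d' := by
  obtain ⟨P⟩ := hγ
  obtain ⟨Z, hZ₀, hZ⟩ := exists_expUnits_eq_of_path P.toContinuousMap
  have hd : Z (0, 1) = period N d := h.eq_period (w := ⟨fun t => Z (0, t), by fun_prop⟩) (hZ₀ 0)
    fun t => by rw [← P.source]; exact hZ 0 t
  have hd' : Z (1, 1) = period N d' := h'.eq_period (w := ⟨fun t => Z (1, t), by fun_prop⟩) (hZ₀ 1)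
    fun t => by rw [← P.target]; exact hZ 1 t
  have hconst : (Z (0, 1)).1 - 0 = (Z (1, 1)).1 - 0 :=
    sub_eq_sub_of_expUnits_eq (z := fun s => (Z (s, 1)).1) (by fun_prop) continuous_const
      (fun s => smul_onesUK_injective (hE := hE) <| by
        simp only [← hZ s 1, Loop.at_of_endpoint _ (Or.inr rfl), expUnits_zero, one_smul]) 0 1
  rw [sub_zero, sub_zero] at hconst
  exact period_injective (hd.symm.trans ((Subtype.ext hconst).trans hd'))

lemma HasWinding.joined {γ γ' : loopFibre N hE} {d : relationLattice N}
    (h : HasWinding γ.1 d) (h' : HasWinding γ'.1 d) : Joined γ γ' := by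
  obtain ⟨z, hz₀, hz₁, hz⟩ := h
  obtain ⟨z', hz₀', hz₁', hz'⟩ := h'
  have hperiod (c : ℂ) : (1 - c) • period N d + c • period N d = period N d := by
    rw [← add_smul, sub_add_cancel, one_smul]
  obtain ⟨p, hp⟩ := exists_loopFibre_expUnits (hE := hE)
    ⟨fun x : I × I => (1 - ((x.1 : ℝ) : ℂ)) • z x.2 + ((x.1 : ℝ) : ℂ) • z' x.2, by fun_prop⟩ <| by
      rintro s t (rfl | rfl)
      · simp [hz₀, hz₀', expUnits_zero]
      · exact exists_period_eq_iff.1 ⟨d, by simp only [ContinuousMap.coe_mk, hz₁, hz₁', hperiod]⟩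
  refine ⟨⟨p, Subtype.ext <| Loop.ext_at fun t => ?_, Subtype.ext <| Loop.ext_at fun t => ?_⟩⟩
  · exact (hp 0 t).trans (by simp [hz])
  · exact (hp 1 t).trans (by simp [hz'])

lemma HasWinding.exists_translation {γ : loopFibre N hE} {d : relationLattice N}
    (h : HasWinding γ.1 d) : ∃ τ : C(Loop ↥(UK K) (onesUK hE), Loop ↥(UK K) (onesUK hE)),
      (∀ γ', loopQ N hE (τ γ') = loopQ N hE γ') ∧ τ (Loop.const _) = γ ∧
        ∀ γ' d', HasWinding γ' d' → HasWinding (τ γ') (d' + d) := by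
  obtain ⟨z, hz₀, hz₁, hz⟩ := h
  have hend (t : I) (ht : t = 0 ∨ t = 1) : expUnits (z t).1 = 1 := by
    rcases ht with rfl | rfl
    · rw [hz₀]; exact expUnits_zero
    · exact exists_period_eq_iff.1 ⟨d, hz₁.symm⟩
  obtain ⟨τ, hτ⟩ := exists_loop_curry (z₀ := onesUK hE)
    ⟨fun x : Loop ↥(UK K) (onesUK hE) × I => expUnits (z x.2).1 • x.1.at x.2, by
      have := continuous_loop_at (Z := ↥(UK K)) (z₀ := onesUK hE); fun_prop⟩ fun γ' t ht => by
        simp [hend t ht, γ'.at_of_endpoint ht]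
  refine ⟨τ, fun γ' => Loop.ext_at fun t => ?_, Loop.ext_at fun t => ?_, ?_⟩
  · have : qmap N K ((τ γ').at t) = qmap N K (γ'.at t) :=
      (qmap_eq_qmap_iff.2 ⟨⟨_, expUnits_mem_torus (z t).2⟩, (hτ γ' t).symm⟩).symm
    exact this
  · exact (hτ _ t).trans (hz t).symm
  · rintro γ' d' ⟨z', hz₀', hz₁', hz'⟩
    refine ⟨z' + z, by simp [hz₀, hz₀'], by simp [hz₁, hz₁'], fun t => (hτ γ' t).trans ?_⟩
    change expUnits (z t).1 • γ'.at t = expUnits ((z' t).1 + (z t).1) • onesUK hE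
    rw [hz', add_comm, expUnits_add, mul_smul]

lemma exists_hasWinding_eq (d : relationLattice N) : ∃ γ : loopFibre N hE, HasWinding γ.1 d := by
  let z : C(I, lieTorus N) := ⟨fun t => ((t : ℝ) : ℂ) • period N d, by fun_prop⟩
  obtain ⟨p, hp⟩ := exists_loopFibre_expUnits (hE := hE) (Y := Unit)
    ⟨fun x => z x.2, by fun_prop⟩ <| by
    rintro - t (rfl | rfl)
    · simp [z, expUnits_zero]
    · exact exists_period_eq_iff.1 ⟨d, by simp [z]⟩
  exact ⟨p (), z, by simp [z], by simp [z], hp ()⟩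

lemma exists_isFibreDegree (N : Fin r → Fin n → ℤ) (hE : ∅ ∈ K) :
    ∃ deg : loopFibre N hE → relationLattice N, IsFibreDegree (loopQ N hE) (Loop.const _) deg := by
  choose deg hdeg using exists_hasWinding (N := N) (hE := hE)
  have hdeg_eq {γ : loopFibre N hE} {d} (h : HasWinding γ.1 d) : deg γ = d :=
    (hdeg γ).eq_of_joined h (.refl γ)
  refine ⟨deg, fun d => ?_, fun γ γ' => ⟨(hdeg γ).eq_of_joined (hdeg γ'), fun h => ?_⟩,
    fun γ => ?_⟩
  · exact (exists_hasWinding_eq d).imp fun _ => hdeg_eq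
  · exact (hdeg γ).joined (h ▸ hdeg γ')
  · obtain ⟨τ, hq, hγ, hτ⟩ := (hdeg γ).exists_translation
    exact ⟨τ, hq, hγ, fun γ' γ'' h => hdeg_eq (h ▸ hτ _ _ (hdeg γ'))⟩

end Winding

/-! ### The map of loop spaces -/

section LoopQ

open scoped unitInterval

variable {n r : ℕ} {N : Fin r → Fin n → ℤ} {K : Set (Finset (Fin r))}

lemma Splits.liftsRel_loopQ (hs : Splits N K) (hE : ∅ ∈ K) {ι : Type*} [Finite ι]
    {A : Set (ι → I)} (hA : IsClosed A) (hlog : HasLogs (cylinder A)) : LiftsRel (loopQ N hE) A :=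
  (hs.liftsRel hE (isClosed_cylinder hA) hlog).loopMap hA rfl

lemma Splits.bijective_piMap_loopQ (hs : Splits N K) (hE : ∅ ∈ K) {k : ℕ} (hk : 2 ≤ k)
    (γ : Loop ↥(UK K) (onesUK hE)) : Function.Bijective (piMap k (loopQ N hE) γ) := by
  have hlift {ι : Type} [Fintype ι] (hι : 2 ≤ Fintype.card ι) :
      LiftsRel (loopQ N hE) (Cube.boundary ι) :=
    hs.liftsRel_loopQ hE isClosed_boundary <| boundary_option ▸ hasLogs_boundary (by simpa)
  exact ⟨piMap_injective_of_liftsRel k (hlift (by simpa using hk.trans k.le_succ)) γ,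
    piMap_surjective_of_liftsRel k (hlift (by simpa)) γ⟩

lemma cylinder_openBox {κ : Type*} (j : κ) : cylinder (openBox j) = openBox (some j) := by
  ext x
  simp [cylinder, openBox, cubeTail, Option.exists, or_left_comm]

lemma setOf_apply_unit_eq_zero : {x : Unit → I | x () = 0} = openBox () := by
  ext x
  simp [openBox]

lemma Splits.nonempty_fundamentalGroup_loop_mulEquiv (hs : Splits N K) (hE : ∅ ∈ K)
    [SimplyConnectedSpace (Loop ↥(UK K) (onesUK hE))] :
    Nonempty (FundamentalGroup (Loop (XS N K) (baseX N K hE)) (Loop.const _) ≃*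
      Multiplicative (relationLattice N)) := by
  have hlift {κ : Type} [Fintype κ] (j : κ) : LiftsRel (loopQ N hE) (openBox j) :=
    hs.liftsRel_loopQ hE (isClosed_openBox j) (cylinder_openBox j ▸ hasLogs_openBox _)
  obtain ⟨deg, hdeg⟩ := exists_isFibreDegree N hE
  exact hdeg.nonempty_mulEquiv (setOf_apply_unit_eq_zero ▸ hlift ())
    (setOf_apply_unit_eq_zero ▸ cylinder_openBox () ▸ hlift _)

end LoopQ

lemma nonempty_relationLattice_linearEquiv {n r : ℕ} {N : Fin r → Fin n → ℤ} (h2 : Cond2 N) :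
    Nonempty (relationLattice N ≃ₗ[ℤ] (Fin (r - n) → ℤ)) := by
  have hquot : Module.finrank ℤ ((Fin r → ℤ) ⧸ relationLattice N) = n :=
    ((Fintype.linearCombination ℤ N).quotKerEquivOfSurjective
      (surjective_linearCombination h2)).finrank_eq.trans (Module.finrank_fin_fun ℤ)
  have hsum := (relationLattice N).finrank_quotient_add_finrank
  rw [hquot, Module.finrank_fin_fun] at hsum
  exact ⟨LinearEquiv.ofFinrankEq _ _ (by rw [Module.finrank_fin_fun]; omega)⟩

/-- If the primitive generators span `ℤ^n`, then `π₂(X_Σ) ≅ ℤ^{r−n}`,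
the loop space `Ω U(K_Σ)` is path connected and simply connected, and
`Ω q_Σ : Ω U(K_Σ) → Ω X_Σ` is a universal covering with fiber `ℤ^{r−n}`:
`π₁(Ω X_Σ) ≅ ℤ^{r−n}` and `(Ω q_Σ)_*` is an isomorphism on `π_k` for every `k ≥ 2`. -/
theorem loop_qS_universal_covering
    {n r : ℕ} (F : Fan n) (N : Fin r → Fin n → ℤ)
    (hPG : IsPrimGens F N) (hNS : F.NonSingular) (h2 : Cond2 N) :
    Nonempty (HomotopyGroup (Fin 2) (XS N (KC F N)) (baseX N (KC F N) (empty_mem_KC F N))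
        ≃* Multiplicative (Fin (r - n) → ℤ)) ∧
    PathConnectedSpace (Loop ↥(UK (KC F N)) (onesUK (empty_mem_KC F N))) ∧
    SimplyConnectedSpace (Loop ↥(UK (KC F N)) (onesUK (empty_mem_KC F N))) ∧
    Nonempty (HomotopyGroup (Fin 1)
        (Loop (XS N (KC F N)) (baseX N (KC F N) (empty_mem_KC F N)))
        (Loop.const _) ≃* Multiplicative (Fin (r - n) → ℤ)) ∧
    ∀ (γ : Loop ↥(UK (KC F N)) (onesUK (empty_mem_KC F N))) (k : ℕ), 2 ≤ k →
      Function.Bijective (piMap k (loopMap (qCont N (KC F N)) rfl) γ) := by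
  have hE := empty_mem_KC F N
  have hs : Splits N (KC F N) := splits_KC hPG hNS h2
  have hext : IsCubeExtensor 2 (Loop ↥(UK (KC F N)) (onesUK hE)) :=
    (isCubeExtensor_three_of_subsingletonZeros_subset (isOpen_UK _)
      (subsingletonZeros_subset_UK hPG)).loop
  have : Nonempty (Loop ↥(UK (KC F N)) (onesUK hE)) := ⟨Loop.const _⟩
  have hsc : SimplyConnectedSpace (Loop ↥(UK (KC F N)) (onesUK hE)) := hext.simplyConnectedSpace
  obtain ⟨e⟩ := nonempty_relationLattice_linearEquiv h2
  obtain ⟨f⟩ := hs.nonempty_fundamentalGroup_loop_mulEquiv hE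
  obtain ⟨g⟩ := nonempty_pi_two_mulEquiv_fundamentalGroup_loop (baseX N (KC F N) hE)
  let f' := f.trans e.toAddEquiv.toMultiplicative
  exact ⟨⟨g.trans f'⟩, inferInstance, hsc,
    ⟨(HomotopyGroup.pi1MulEquivFundamentalGroup).trans f'⟩,
    fun γ k hk => hs.bijective_piMap_loopQ hE hk γ⟩

end Toric
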